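/- arXiv:1806.04256 — 3 statements merged into one kernel-verified Lean document; each statement's English description precedes it below -/
import Mathlib

section
/- Let f : {±1}^k → {±1} and let p ∈ (0,1]. If T ⊆ [k] is a random subset including each coordinate independently with probability p, then E_T[Var[Bias_T f]] ≤ p·Var[f]; moreover, if p ≤ 1/3 then E_T[Var[Bias_T f]] ≤ Var[f]^{3/2}. -/
open Finset

/-- Uniform-distribution expectation of `f` over a finite type. -/
noncomputable def uexp {α : Type*} [Fintype α] (f : α → ℝ) : ℝ :=
  (∑ x : α, f x) / (Fintype.card α : ℝ)

/-- Variance under the uniform distribution. -/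
noncomputable def uvar {α : Type*} [Fintype α] (f : α → ℝ) : ℝ :=
  uexp (fun x => f x ^ 2) - (uexp f) ^ 2

open Classical in
/-- Real-valued indicator of a proposition. -/
noncomputable def ind (P : Prop) : ℝ := if P then 1 else 0

/-- `sel T x y` agrees with `x` on `T` and with `y` outside of `T`. -/
def sel {n : ℕ} (T : Finset (Fin n)) (x y : Fin n → Bool) : Fin n → Bool :=
  fun i => if i ∈ T then x i else y i

/-- The bias function of `f` with respect to the set `T` of live coordinates. -/
noncomputable def biasFn {n : ℕ} (T : Finset (Fin n)) (f : (Fin n → Bool) → ℝ) :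
    (Fin n → Bool) → ℝ :=
  fun x => uexp (fun y : Fin n → Bool => f (sel T x y))

/-- A layered read-once branching program of width `w` and length `n`.
`V i` is the set of vertices of layer `i`; the Boolean `true` corresponds to the
edge label `1` and `false` to the edge label `-1`; the program outputs `-1` iff it
accepts. -/
structure ROBP (w n : ℕ) where
  V : Fin (n + 1) → Finset (Fin w)
  V_nonempty : ∀ i, (V i).Nonempty
  start : Fin w
  start_mem : start ∈ V 0
  trans : Fin n → Bool → Fin w → Fin w
  trans_mem : ∀ (i : Fin n) (b : Bool) (v : Fin w), v ∈ V i.castSucc → trans i b v ∈ V i.succ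
  accept : Fin w → Bool

namespace ROBP

variable {w n : ℕ}

/-- The state reached at layer `j` when starting from state `v` at layer `i`. -/
def runTo (B : ROBP w n) (x : Fin n → Bool) (v : Fin w) (i j : ℕ) : Fin w :=
  if h : i < j ∧ i < n then runTo B x (B.trans ⟨i, h.2⟩ (x ⟨i, h.2⟩) v) (i + 1) j else v
termination_by j - i
decreasing_by omega

/-- The final state on input `x`, starting from the start vertex. -/
def run (B : ROBP w n) (x : Fin n → Bool) : Fin w := B.runTo x B.start 0 n

/-- The `±1` value computed by `B` on `x` (`-1` means accept). -/
noncomputable def eval (B : ROBP w n) (x : Fin n → Bool) : ℝ :=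
  if B.accept (B.run x) then -1 else 1

/-- Probability (over a uniformly random input) of reaching vertex `v` at layer `j`. -/
noncomputable def reachProb (B : ROBP w n) (j : ℕ) (v : Fin w) : ℝ :=
  uexp (fun x : Fin n → Bool => if B.runTo x B.start 0 j = v then (1 : ℝ) else 0)

/-- Acceptance probability starting from vertex `v` at layer `i`, on a uniform input. -/
noncomputable def beta (B : ROBP w n) (i : ℕ) (v : Fin w) : ℝ :=
  uexp (fun x : Fin n → Bool => if B.accept (B.runTo x v i n) then (1 : ℝ) else 0)

/-- Layer `i` of edges is colliding: two distinct vertices of layer `i` have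
equally-labeled edges entering the same vertex of layer `i+1`. -/
def Colliding (B : ROBP w n) (i : Fin n) : Prop :=
  ∃ (b : Bool) (u v : Fin w), u ∈ B.V i.castSucc ∧ v ∈ B.V i.castSucc ∧ u ≠ v ∧
    B.trans i b u = B.trans i b v

/-- The number of colliding layers of `B`. -/
noncomputable def collidingCount (B : ROBP w n) : ℕ :=
  Nat.card {i : Fin n // B.Colliding i}

/-- The value of `B` on `x` when all vertices of `V 0` are interpreted as start
vertices: the average of the `±1` outcomes of the corresponding computation paths. -/
noncomputable def avgEval (B : ROBP w n) (x : Fin n → Bool) : ℝ :=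
  (∑ v ∈ B.V 0, (if B.accept (B.runTo x v 0 n) then (-1 : ℝ) else 1)) / ((B.V 0).card : ℝ)

/-- The averaged value of the suffix of `B` starting at layer `t`, whose start-vertex
set is `V t`. -/
noncomputable def suffixEval (B : ROBP w n) (t : Fin (n + 1)) (x : Fin n → Bool) : ℝ :=
  (∑ v ∈ B.V t, (if B.accept (B.runTo x v (t : ℕ) n) then (-1 : ℝ) else 1)) /
    ((B.V t).card : ℝ)

/-- `B` is a `(w, ℓ, m)`-ROBP: it can be written as a concatenation of `m` consecutive
blocks, each block boundary layer having at most `2` vertices and each block having at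
most `ℓ` colliding layers. -/
def IsDecomp (B : ROBP w n) (ℓ m : ℕ) : Prop :=
  ∃ cut : Fin (m + 1) → Fin (n + 1),
    Monotone cut ∧ cut 0 = 0 ∧ cut (Fin.last m) = Fin.last n ∧
    (∀ j, (B.V (cut j)).card ≤ 2) ∧
    (∀ j : Fin m,
      Nat.card {i : Fin n //
        (cut j.castSucc : ℕ) ≤ (i : ℕ) ∧ (i : ℕ) < (cut j.succ : ℕ) ∧ B.Colliding i} ≤ ℓ)

end ROBP

/-- `G` is a pseudorandom generator that `ε`-fools the real-valued function `f`. -/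
def fools {r n : ℕ} (G : (Fin r → Bool) → (Fin n → Bool)) (f : (Fin n → Bool) → ℝ)
    (ε : ℝ) : Prop :=
  |uexp f - uexp (fun s => f (G s))| ≤ ε

/-- Expectation of `f` under the distribution with mass function `μ`. -/
noncomputable def dExp {α : Type*} [Fintype α] (μ f : α → ℝ) : ℝ :=
  ∑ x : α, μ x * f x

/-- Expectation over a `p`-random subset `T ⊆ [n]` (each coordinate kept in `T`
independently with probability `p`). -/
noncomputable def rpExpect (n : ℕ) (p : ℝ) (g : Finset (Fin n) → ℝ) : ℝ :=
  ∑ T : Finset (Fin n), p ^ T.card * (1 - p) ^ (n - T.card) * g T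

namespace HV

variable {n : ℕ}

noncomputable def sg (b : Bool) : ℝ := if b then -1 else 1

lemma sg_not (b : Bool) : sg (!b) = - sg b := by cases b <;> simp [sg]
lemma sg_sq (b : Bool) : sg b * sg b = 1 := by cases b <;> simp [sg]

noncomputable def chi (S : Finset (Fin n)) (x : Fin n → Bool) : ℝ := ∏ i ∈ S, sg (x i)

def flip (i : Fin n) (x : Fin n → Bool) : Fin n → Bool := Function.update x i (! x i)

lemma flip_flip (i : Fin n) (x : Fin n → Bool) : flip i (flip i x) = x := by
  simp [flip]

lemma flip_self (i : Fin n) (x : Fin n → Bool) : flip i x i = ! x i := by simp [flip]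

lemma flip_ne {i j : Fin n} (h : j ≠ i) (x : Fin n → Bool) : flip i x j = x j := by
  simp [flip, h]

lemma uexp_flip (i : Fin n) (F : (Fin n → Bool) → ℝ) : uexp (fun x => F (flip i x)) = uexp F := by
  unfold uexp
  congr 1
  exact Equiv.sum_comp (Function.Involutive.toPerm (flip i) (flip_flip i)) F

lemma uexp_add {α : Type*} [Fintype α] (F G : α → ℝ) :
    uexp (fun x => F x + G x) = uexp F + uexp G := by
  simp [uexp, Finset.sum_add_distrib, add_div]

lemma uexp_smul {α : Type*} [Fintype α] (c : ℝ) (F : α → ℝ) :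
    uexp (fun x => c * F x) = c * uexp F := by
  simp [uexp, ← Finset.mul_sum, mul_div_assoc]

lemma uexp_sum {α ι : Type*} [Fintype α] (s : Finset ι) (F : ι → α → ℝ) :
    uexp (fun x => ∑ j ∈ s, F j x) = ∑ j ∈ s, uexp (F j) := by
  simp only [uexp]
  rw [Finset.sum_comm, Finset.sum_div]

lemma uexp_const (c : ℝ) : uexp (fun _ : Fin n → Bool => c) = c := by
  simp [uexp]

lemma uexp_mono {α : Type*} [Fintype α] {F G : α → ℝ} (h : ∀ x, F x ≤ G x) :
    uexp F ≤ uexp G := by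
  unfold uexp
  gcongr with x
  exact h x

lemma uexp_odd (i : Fin n) (F : (Fin n → Bool) → ℝ) (h : ∀ x, F (flip i x) = - F x) :
    uexp F = 0 := by
  have h1 := uexp_flip i F
  simp only [h] at h1
  have h2 := uexp_smul (-1) F
  simp only [neg_one_mul] at h2
  linarith

lemma chi_flip_mem {i : Fin n} {S : Finset (Fin n)} (h : i ∈ S) (x : Fin n → Bool) :
    chi S (flip i x) = - chi S x := by
  unfold chi
  rw [← Finset.mul_prod_erase _ _ h, ← Finset.mul_prod_erase _ (fun j => sg (x j)) h,
    flip_self, sg_not, neg_mul]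
  congr 2
  apply Finset.prod_congr rfl
  intro j hj
  rw [flip_ne (Finset.ne_of_mem_erase hj)]

lemma chi_flip_notMem {i : Fin n} {S : Finset (Fin n)} (h : i ∉ S) (x : Fin n → Bool) :
    chi S (flip i x) = chi S x := by
  unfold chi
  apply Finset.prod_congr rfl
  intro j hj
  have hne : j ≠ i := by
    rintro rfl
    exact h hj
  rw [flip_ne hne]

lemma chi_sq (S : Finset (Fin n)) (x : Fin n → Bool) : chi S x * chi S x = 1 := by
  unfold chi
  rw [← Finset.prod_mul_distrib]
  exact Finset.prod_eq_one fun i _ => sg_sq _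

lemma chi_orth (S S' : Finset (Fin n)) :
    uexp (fun x => chi S x * chi S' x) = if S = S' then 1 else 0 := by
  split_ifs with h
  · subst h
    simp only [chi_sq, uexp_const]
  · have : ∃ i, ¬ (i ∈ S ↔ i ∈ S') := by
      by_contra hc
      push Not at hc
      exact h (Finset.ext hc)
    obtain ⟨i, hi⟩ := this
    apply uexp_odd i
    intro x
    by_cases h1 : i ∈ S
    · have h2 : i ∉ S' := by tauto
      rw [chi_flip_mem h1, chi_flip_notMem h2]; ring
    · have h2 : i ∈ S' := by tauto
      rw [chi_flip_mem h2, chi_flip_notMem h1]; ring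

noncomputable def lin (a : Finset (Fin n) → ℝ) (x : Fin n → Bool) : ℝ := ∑ S, a S * chi S x

lemma lin_inner (a b : Finset (Fin n) → ℝ) :
    uexp (fun x => lin a x * lin b x) = ∑ S, a S * b S := by
  have : ∀ x, lin a x * lin b x = ∑ S, ∑ S', (a S * b S') * (chi S x * chi S' x) := by
    intro x
    unfold lin
    rw [Finset.sum_mul_sum]
    refine Finset.sum_congr rfl fun S _ => Finset.sum_congr rfl fun S' _ => by ring
  simp only [this, uexp_sum, uexp_smul, chi_orth]
  simp

lemma lin_mean (a : Finset (Fin n) → ℝ) : uexp (lin a) = a ∅ := by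
  have h := lin_inner a (fun S => if S = ∅ then 1 else 0)
  have e : ∀ x : Fin n → Bool, lin (fun S => if S = ∅ then (1 : ℝ) else 0) x = 1 := by
    intro x; simp [lin, chi]
  simp only [e, mul_one] at h
  simpa using h

lemma lin_var (a : Finset (Fin n) → ℝ) :
    uvar (lin a) = ∑ S, if S = ∅ then 0 else a S ^ 2 := by
  unfold uvar
  have h := lin_inner a a
  simp only [← sq] at h
  rw [h, lin_mean]
  have h2 : a ∅ ^ 2 = ∑ S : Finset (Fin n), if S = ∅ then a S ^ 2 else 0 := by simp
  rw [h2, ← Finset.sum_sub_distrib]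
  refine Finset.sum_congr rfl fun S _ => ?_
  split_ifs <;> simp

noncomputable def four (f : (Fin n → Bool) → ℝ) (S : Finset (Fin n)) : ℝ :=
  uexp (fun x => f x * chi S x)

lemma chi_kernel (x y : Fin n → Bool) :
    ∑ S, chi S x * chi S y = if x = y then (2 : ℝ) ^ n else 0 := by
  have h : ∑ S, chi S x * chi S y = ∏ i, (1 + sg (x i) * sg (y i)) := by
    rw [Finset.prod_one_add]
    simp [chi, Finset.prod_mul_distrib]
  rw [h]
  split_ifs with hxy
  · subst hxy
    simp only [sg_sq]
    norm_num
  · obtain ⟨i, hi⟩ := Function.ne_iff.mp hxy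
    apply Finset.prod_eq_zero (Finset.mem_univ i)
    revert hi
    cases x i <;> cases y i <;> simp [sg]

lemma lin_four (f : (Fin n → Bool) → ℝ) : lin (four f) = f := by
  funext y
  unfold lin four
  have : ∀ S : Finset (Fin n), uexp (fun x => f x * chi S x) * chi S y
      = uexp (fun x => f x * (chi S x * chi S y)) := by
    intro S
    rw [mul_comm, ← uexp_smul]
    congr 1; funext x; ring
  simp only [this]
  rw [← uexp_sum]
  simp only [← Finset.mul_sum, chi_kernel]
  simp [uexp]

lemma chi_sel (T S : Finset (Fin n)) (x : Fin n → Bool) :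
    uexp (fun y => chi S (sel T x y)) = if S ⊆ T then chi S x else 0 := by
  split_ifs with h
  · have : ∀ y, chi S (sel T x y) = chi S x := by
      intro y
      unfold chi
      refine Finset.prod_congr rfl fun i hi => ?_
      simp [sel, h hi]
    simp only [this, uexp_const]
  · obtain ⟨i, hi, hT⟩ := Finset.not_subset.mp h
    apply uexp_odd i
    intro y
    rw [← chi_flip_mem hi]
    congr 1
    funext j
    by_cases hj : j = i
    · subst hj; simp [sel, hT, flip]
    · simp [sel, flip, hj]

lemma bias_lin (T : Finset (Fin n)) (a : Finset (Fin n) → ℝ) :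
    biasFn T (lin a) = lin (fun S => if S ⊆ T then a S else 0) := by
  funext x
  simp only [biasFn, lin, uexp_sum, uexp_smul, chi_sel]
  refine Finset.sum_congr rfl fun S _ => ?_
  split_ifs <;> simp

lemma rp_sub (p : ℝ) (S : Finset (Fin n)) :
    rpExpect n p (fun T => if S ⊆ T then 1 else 0) = p ^ S.card := by
  unfold rpExpect
  have h := Finset.prod_add (fun _ : Fin n => p) (fun i => if i ∈ S then 0 else 1 - p) univ
  have h1 : ∏ i : Fin n, (p + if i ∈ S then 0 else 1 - p) = p ^ S.card := by
    have : ∀ i : Fin n, (p + if i ∈ S then 0 else 1 - p) = if i ∈ S then p else 1 := by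
      intro i; split_ifs <;> ring
    simp only [this]
    rw [Finset.prod_ite_mem]
    simp
  rw [← h1, h, Finset.powerset_univ]
  refine Finset.sum_congr rfl fun T _ => ?_
  rw [Finset.prod_const, mul_assoc]
  congr 1
  show _ * (if S ⊆ T then (1 : ℝ) else 0) = _
  split_ifs with hST
  · rw [Finset.prod_congr rfl (g := fun _ => 1 - p)]
    · rw [Finset.prod_const, Finset.card_sdiff_of_subset (Finset.subset_univ T)]
      simp
    · intro i hi
      have : i ∉ S := fun h => (Finset.mem_sdiff.mp hi).2 (hST h)
      simp [this]
  · obtain ⟨i, hi, hT⟩ := Finset.not_subset.mp hST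
    rw [mul_zero]
    symm
    apply Finset.prod_eq_zero (i := i)
    · simp [hT]
    · simp [hi]

lemma rp_main (p : ℝ) (f : (Fin n → Bool) → ℝ) :
    rpExpect n p (fun T => uvar (biasFn T f)) =
      ∑ S, if S = ∅ then 0 else p ^ S.card * four f S ^ 2 := by
  have h : ∀ T, uvar (biasFn T f) =
      ∑ S, (if S = ∅ then 0 else four f S ^ 2) * (if S ⊆ T then 1 else 0) := by
    intro T
    conv_lhs => rw [← lin_four f]
    rw [bias_lin, lin_var]
    refine Finset.sum_congr rfl fun S _ => ?_
    split_ifs <;> simp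
  simp only [h]
  unfold rpExpect
  simp only [Finset.mul_sum]
  rw [Finset.sum_comm]
  refine Finset.sum_congr rfl fun S _ => ?_
  have h2 := rp_sub p S
  unfold rpExpect at h2
  split_ifs with hS
  · simp
  · rw [← h2, Finset.sum_mul]
    refine Finset.sum_congr rfl fun T _ => by ring

/- Bonami lemma -/
lemma cs (G H : (Fin n → Bool) → ℝ) :
    uexp (fun x => G x * H x) ^ 2 ≤ uexp (fun x => G x ^ 2) * uexp (fun x => H x ^ 2) := by
  unfold uexp
  rw [div_pow, div_mul_div_comm, ← sq]
  gcongr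
  exact Finset.sum_mul_sq_le_sq_mul_sq _ _ _

noncomputable def linOn (U : Finset (Fin n)) (b : Finset (Fin n) → ℝ) (x : Fin n → Bool) : ℝ :=
  ∑ S ∈ U.powerset, b S * chi S x

lemma linOn_flip {i : Fin n} {U : Finset (Fin n)} (h : i ∉ U) (b : Finset (Fin n) → ℝ)
    (x : Fin n → Bool) : linOn U b (flip i x) = linOn U b x := by
  unfold linOn
  refine Finset.sum_congr rfl fun S hS => ?_
  rw [chi_flip_notMem]
  exact fun hi => h (Finset.mem_powerset.mp hS hi)

lemma bonami (U : Finset (Fin n)) : ∀ b : Finset (Fin n) → ℝ,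
    uexp (fun x => linOn U b x ^ 4) ≤ (∑ S ∈ U.powerset, 3 ^ S.card * b S ^ 2) ^ 2 := by
  induction U using Finset.induction_on with
  | empty =>
    intro b
    simp [linOn, chi, uexp_const]
    apply le_of_eq; ring
  | insert i U hi ih =>
    intro b
    have hG := ih b
    have hH := ih (fun S => b (insert i S))
    set A := ∑ S ∈ U.powerset, 3 ^ S.card * b S ^ 2 with hA
    set B := ∑ S ∈ U.powerset, 3 ^ S.card * b (insert i S) ^ 2 with hB
    have hA0 : 0 ≤ A := Finset.sum_nonneg fun S _ => by positivity
    have hB0 : 0 ≤ B := Finset.sum_nonneg fun S _ => by positivity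
    set G := linOn U b with hGd
    set H := linOn U (fun S => b (insert i S)) with hHd
    have hsum : ∑ S ∈ (insert i U).powerset, 3 ^ S.card * b S ^ 2 = A + 3 * B := by
      rw [Finset.sum_powerset_insert hi, hA, hB, Finset.mul_sum]
      congr 1
      refine Finset.sum_congr rfl fun S hS => ?_
      rw [Finset.card_insert_of_notMem (fun h => hi (Finset.mem_powerset.mp hS h))]
      ring
    have hlin : ∀ x, linOn (insert i U) b x = G x + sg (x i) * H x := by
      intro x
      rw [hGd, hHd]
      unfold linOn
      rw [Finset.sum_powerset_insert hi, Finset.mul_sum]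
      congr 1
      refine Finset.sum_congr rfl fun S hS => ?_
      unfold chi
      rw [Finset.prod_insert (fun h => hi (Finset.mem_powerset.mp hS h))]
      ring
    rw [hsum]
    have hexp : ∀ x, linOn (insert i U) b x ^ 4 =
        G x ^ 4 + (6 * (G x ^ 2 * H x ^ 2) + (H x ^ 4 +
          sg (x i) * (4 * G x ^ 3 * H x + 4 * G x * H x ^ 3))) := by
      intro x
      rw [hlin]
      have h1 := sg_sq (x i)
      have h2 : sg (x i) ^ 2 = 1 := by rw [sq, h1]
      have h3 : sg (x i) ^ 3 = sg (x i) := by rw [pow_succ, h2, one_mul]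
      have h4 : sg (x i) ^ 4 = 1 := by rw [pow_succ, h3, h1]
      linear_combination (6 * G x ^ 2 * H x ^ 2) * h2 + 4 * G x * H x ^ 3 * h3 + H x ^ 4 * h4
    simp only [hexp, uexp_add, uexp_smul]
    have hodd : uexp (fun x => sg (x i) * (4 * G x ^ 3 * H x + 4 * G x * H x ^ 3)) = 0 := by
      apply uexp_odd i
      intro x
      simp only [hGd, hHd, linOn_flip hi, flip_self, sg_not]
      ring
    have hcs := cs (fun x => G x ^ 2) (fun x => H x ^ 2)
    have e4 : ∀ r : ℝ, (r ^ 2) ^ 2 = r ^ 4 := fun r => by ring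
    simp only [e4] at hcs
    have hH0 : 0 ≤ uexp (fun x => H x ^ 4) := by
      have := uexp_mono (F := fun _ : Fin n → Bool => (0:ℝ)) (G := fun x => H x ^ 4)
        (fun x => by positivity)
      rwa [uexp_const] at this
    have hGH : uexp (fun x => G x ^ 2 * H x ^ 2) ≤ A * B := by
      refine (pow_le_pow_iff_left₀ ?_ (by positivity) two_ne_zero).mp ?_
      · have := uexp_mono (F := fun _ : Fin n → Bool => (0:ℝ)) (G := fun x => G x ^ 2 * H x ^ 2)
          (fun x => by positivity)
        rwa [uexp_const] at this
      calc _ ≤ _ := hcs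
        _ ≤ A ^ 2 * B ^ 2 := by gcongr
        _ = _ := by ring
    rw [hodd]
    nlinarith [sq_nonneg B]

end HV

open HV in
theorem hypercontractivity_of_variance
    (k : ℕ) (f : (Fin k → Bool) → ℝ) (hf : ∀ x, f x = 1 ∨ f x = -1)
    (p : ℝ) (hp0 : 0 < p) (hp1 : p ≤ 1) :
    rpExpect k p (fun T => uvar (biasFn T f)) ≤ p * uvar f ∧
    (p ≤ 1 / 3 →
      rpExpect k p (fun T => uvar (biasFn T f)) ≤ uvar f ^ ((3 : ℝ) / 2)) := by
  have hV : uvar f = ∑ S, if S = ∅ then 0 else four f S ^ 2 := by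
    conv_lhs => rw [← lin_four f]
    rw [lin_var]
  rw [rp_main]
  constructor
  · rw [hV, Finset.mul_sum]
    refine Finset.sum_le_sum fun S _ => ?_
    split_ifs with hS
    · simp
    · gcongr
      exact pow_le_of_le_one hp0.le hp1 (by simpa using hS)
  intro hp3
  set Q := ∑ S : Finset (Fin k), if S = ∅ then 0 else (1 / 3 : ℝ) ^ S.card * four f S ^ 2 with hQ
  have hQ0 : 0 ≤ Q := Finset.sum_nonneg fun S _ => by split_ifs <;> positivity
  have hV0 : 0 ≤ uvar f := by
    rw [hV]; exact Finset.sum_nonneg fun S _ => by split_ifs <;> positivity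
  refine le_trans (b := Q) ?_ ?_
  · refine Finset.sum_le_sum fun S _ => ?_
    split_ifs with hS
    · simp
    · gcongr
  set b : Finset (Fin k) → ℝ := fun S => if S = ∅ then 0 else (1 / 3 : ℝ) ^ S.card * four f S with hb
  set h := lin b with hh
  have hmean : uexp h = 0 := by rw [hh, lin_mean]; simp [hb]
  have hfh : uexp (fun x => f x * h x) = Q := by
    have := lin_inner (four f) b
    rw [lin_four] at this
    rw [this, hQ]
    refine Finset.sum_congr rfl fun S _ => ?_
    simp only [hb]
    split_ifs <;> ring
  have h4 : uexp (fun x => h x ^ 4) ≤ Q ^ 2 := by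
    have := bonami univ b
    have e : linOn univ b = h := by funext x; simp [linOn, hh, lin]
    rw [e] at this
    refine this.trans (le_of_eq ?_)
    congr 1
    rw [Finset.powerset_univ, hQ]
    refine Finset.sum_congr rfl fun S _ => ?_
    simp only [hb]
    split_ifs
    · simp
    · have : (3:ℝ) ^ S.card * (1 / 3) ^ S.card = 1 := by rw [← mul_pow]; norm_num
      linear_combination ((1 / 3 : ℝ) ^ S.card * four f S ^ 2) * this
  set m := uexp f with hm
  have hf2 : ∀ x, f x ^ 2 = 1 := fun x => by rcases hf x with e | e <;> rw [e] <;> norm_num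
  have hVm : uvar f = 1 - m ^ 2 := by
    unfold uvar; simp only [hf2, uexp_const]; rw [hm]
  set V := uvar f with hVd
  have key : Q ^ 2 ≤ V ^ 3 := by
    by_cases hVz : V = 0
    · have : Q = 0 := by
        rw [hQ]
        have h0 := (Finset.sum_eq_zero_iff_of_nonneg
          (fun S _ => by split_ifs <;> positivity)).mp (hV.symm.trans hVz)
        refine Finset.sum_eq_zero fun S hS => ?_
        have := h0 S hS
        split_ifs at this ⊢ with hS
        · rfl
        · rw [this, mul_zero]
      rw [this, hVz]; norm_num
    have hVp : 0 < V := lt_of_le_of_ne hV0 (Ne.symm hVz)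
    have tang : ∀ t : ℝ, (1 + 3 * m ^ 2) * (4 * t ^ 3 * Q - 3 * t ^ 4 * V) ≤ Q ^ 2 := by
      intro t
      refine le_trans ?_ h4
      have pt : ∀ x, (4 * t ^ 3 * (1 + 3 * m ^ 2)) * (f x * h x) +
          ((4 * t ^ 3 * (- 3 * m - m ^ 3)) * h x + (- 3 * t ^ 4 * (1 + 6 * m ^ 2 + m ^ 4)
            + (- 3 * t ^ 4 * (- 4 * m - 4 * m ^ 3)) * f x)) ≤ h x ^ 4 := by
        intro x
        have e : (4 * t ^ 3 * (1 + 3 * m ^ 2)) * (f x * h x) +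
          ((4 * t ^ 3 * (- 3 * m - m ^ 3)) * h x + (- 3 * t ^ 4 * (1 + 6 * m ^ 2 + m ^ 4)
            + (- 3 * t ^ 4 * (- 4 * m - 4 * m ^ 3)) * f x)) =
            4 * (t * (f x - m)) ^ 3 * h x - 3 * (t * (f x - m)) ^ 4 := by
          rcases hf x with e | e <;> rw [e] <;> ring
        rw [e]
        generalize t * (f x - m) = c
        generalize h x = d
        have : d ^ 4 - (4 * c ^ 3 * d - 3 * c ^ 4) = (d - c) ^ 2 * ((d + c) ^ 2 + 2 * c ^ 2) := by
          ring
        have : 0 ≤ (d - c) ^ 2 * ((d + c) ^ 2 + 2 * c ^ 2) := by positivity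
        linarith
      have := uexp_mono pt
      simp only [uexp_add, uexp_smul, uexp_const, hfh, ← hm] at this
      have e1 : uexp (fun x => h x) = 0 := hmean
      have e2 : uexp (fun x => f x) = m := rfl
      refine le_trans (le_of_eq ?_) this
      rw [hVm]
      simp only [e1, e2, hmean]
      ring
    have ht := tang (Q / V)
    have e : 4 * (Q / V) ^ 3 * Q - 3 * (Q / V) ^ 4 * V = Q ^ 4 / V ^ 3 := by
      field_simp; ring
    rw [e] at ht
    have h5 : Q ^ 4 / V ^ 3 ≤ Q ^ 2 := by
      refine le_trans ?_ ht
      have : 0 ≤ Q ^ 4 / V ^ 3 := by positivity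
      nlinarith [mul_nonneg (sq_nonneg m) this]
    rw [div_le_iff₀ (by positivity)] at h5
    by_cases hQz : Q = 0
    · rw [hQz]; simpa using pow_nonneg hV0 3
    have : 0 < Q ^ 2 := by positivity
    refine le_of_mul_le_mul_left ?_ this
    linarith [show Q ^ 2 * Q ^ 2 = Q ^ 4 by ring]
  have e : V ^ ((3 : ℝ) / 2) = √(V ^ 3) := by
    rw [Real.sqrt_eq_rpow, ← Real.rpow_natCast, ← Real.rpow_mul hV0]
    norm_num
  rw [e]
  exact Real.le_sqrt_of_sq_le key
end

section
/- Let 0 < ε < δ ≤ 1. Let F_1,…,F_k : {±1}^n → [−1,1] be functions depending on pairwise disjoint sets of input variables such that each F_i is δ-fooled by every ε-biased distribution (i.e., |E_{x∼D}[F_i(x)] − E_{x∼U_n}[F_i(x)]| ≤ δ for every ε-biased D). Let H : [−1,1]^k → [−1,1] be multilinear in its inputs. Then the function x ↦ H(F_1(x),…,F_k(x)) is (16^k·2δ)-fooled by every ε^k-biased distribution. -/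
open Finset

/-- `f` depends only on the coordinates in `S`. -/
def DependsOnlyOn {n : ℕ} (f : (Fin n → Bool) → ℝ) (S : Finset (Fin n)) : Prop :=
  ∀ x y, (∀ j ∈ S, x j = y j) → f x = f y

/-- The `±1` encoding of a bit (`true ↦ 1`, `false ↦ -1`). -/
def chi (b : Bool) : ℝ := if b then 1 else -1

/-- `μ` is (the mass function of) a `δ`-biased distribution on `{±1}^n`. -/
def IsBiased {n : ℕ} (μ : (Fin n → Bool) → ℝ) (δ : ℝ) : Prop :=
  (∀ x, 0 ≤ μ x) ∧ (∑ x : Fin n → Bool, μ x = 1) ∧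
  ∀ S : Finset (Fin n), S.Nonempty →
    |∑ x : Fin n → Bool, μ x * ∏ i ∈ S, chi (x i)| ≤ δ

noncomputable def XX {n : ℕ} (T : Finset (Fin n)) (x : Fin n → Bool) : ℝ := ∏ i ∈ T, chi (x i)

noncomputable def MM {n : ℕ} (ε : ℝ) (a : Finset (Fin n) → ℝ) : ℝ :=
  a ∅ + ε * ∑ T ∈ univ.erase ∅, |a T|

noncomputable def PL {n : ℕ} (a : Finset (Fin n) → ℝ) (x : Fin n → Bool) : ℝ :=
  ∑ T, a T * XX T x

lemma PL_add {n : ℕ} (a b : Finset (Fin n) → ℝ) (x) : PL (a + b) x = PL a x + PL b x := by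
  simp [PL, add_mul, sum_add_distrib]

lemma PL_smul {n : ℕ} (c : ℝ) (b : Finset (Fin n) → ℝ) (x) : PL (c • b) x = c * PL b x := by
  simp [PL, mul_sum, mul_assoc]

lemma PL_single {n : ℕ} (c : ℝ) (T : Finset (Fin n)) (x) : PL (Pi.single T c) x = c * XX T x := by
  simp [PL, Pi.single_apply, ite_mul]

lemma MM_add {n : ℕ} {ε : ℝ} (hε : 0 ≤ ε) (a b : Finset (Fin n) → ℝ) :
    MM ε (a + b) ≤ MM ε a + MM ε b := by
  have : ∑ T ∈ univ.erase ∅, |(a + b) T| ≤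
      ∑ T ∈ univ.erase ∅, |a T| + ∑ T ∈ univ.erase ∅, |b T| := by
    rw [← sum_add_distrib]
    exact sum_le_sum fun T _ => abs_add_le _ _
  have := mul_le_mul_of_nonneg_left this hε
  simp only [MM, Pi.add_apply] at *
  linarith

lemma MM_smul {n : ℕ} {ε : ℝ} (c : ℝ) (hc : 0 ≤ c) (a : Finset (Fin n) → ℝ) :
    MM ε (c • a) = c * MM ε a := by
  simp only [MM, Pi.smul_apply, smul_eq_mul, abs_mul, abs_of_nonneg hc, ← mul_sum]
  ring

lemma MM_single_empty {n : ℕ} {ε : ℝ} (c : ℝ) :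
    MM ε (Pi.single (∅ : Finset (Fin n)) c) = c := by
  have : ∑ T ∈ univ.erase ∅, |(Pi.single (∅ : Finset (Fin n)) c : Finset (Fin n) → ℝ) T| = 0 := by
    apply sum_eq_zero
    intro T hT
    rw [Pi.single_eq_of_ne (ne_of_mem_erase hT), abs_zero]
  simp [MM, this]

lemma MM_single {n : ℕ} {ε : ℝ} (c : ℝ) (T : Finset (Fin n)) (hT : T.Nonempty) :
    MM ε (Pi.single T c) = ε * |c| := by
  have : ∑ T' ∈ univ.erase ∅, |(Pi.single T c : Finset (Fin n) → ℝ) T'| = |c| := by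
    rw [sum_eq_single T]
    · simp
    · intro b _ hb
      rw [Pi.single_eq_of_ne hb, abs_zero]
    · intro h
      exact absurd (mem_erase.2 ⟨hT.ne_empty, mem_univ _⟩) h
  simp [MM, this, Pi.single_eq_of_ne hT.ne_empty.symm]

lemma chi_not (b : Bool) : chi (!b) = - chi b := by cases b <;> simp [chi]

lemma sum_XX_sel {n : ℕ} (S T : Finset (Fin n)) (x : Fin n → Bool) :
    ∑ y, XX T (sel S x y) = if T ⊆ S then 2 ^ n * XX T x else 0 := by
  split_ifs with h
  · have : ∀ y, XX T (sel S x y) = XX T x := by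
      intro y
      apply prod_congr rfl
      intro i hi
      simp [sel, h hi]
    simp [this]
  · obtain ⟨i, hT, hS⟩ := not_subset.1 h
    refine sum_involution (fun y _ => Function.update y i (!y i)) ?_ ?_ ?_ ?_
    · intro y _
      unfold XX
      rw [← mul_prod_erase _ _ hT, ← mul_prod_erase _ _ hT]
      have : ∏ j ∈ T.erase i, chi (sel S x (Function.update y i (!y i)) j)
          = ∏ j ∈ T.erase i, chi (sel S x y j) := by
        apply prod_congr rfl
        intro j hj
        simp [sel, Function.update_of_ne (ne_of_mem_erase hj)]
      rw [this]
      simp [sel, hS, chi_not]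
    · intro y _ _ h
      have := congrFun h i
      simp at this
    · simp
    · intro y _
      ext j
      by_cases hj : j = i
      · subst hj; simp
      · simp [hj]

lemma avg_PL {n : ℕ} (S : Finset (Fin n)) (a : Finset (Fin n) → ℝ) (x : Fin n → Bool) :
    ∑ y, PL a (sel S x y) = 2 ^ n * PL (fun T => if T ⊆ S then a T else 0) x := by
  unfold PL
  rw [sum_comm, mul_sum]
  apply sum_congr rfl
  intro T _
  rw [← mul_sum, sum_XX_sel]
  by_cases h : T ⊆ S
  · simp only [h, if_true]; ring
  · simp [h]

lemma trunc {n : ℕ} (S : Finset (Fin n)) (a : Finset (Fin n) → ℝ) (G : (Fin n → Bool) → ℝ)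
    (hG : DependsOnlyOn G S) (h : ∀ x, G x ≤ PL a x) (x) :
    G x ≤ PL (fun T => if T ⊆ S then a T else 0) x := by
  have h1 : ∑ y : Fin n → Bool, G x ≤ ∑ y, PL a (sel S x y) := by
    apply sum_le_sum
    intro y _
    have : G x = G (sel S x y) := hG _ _ (fun j hj => by simp [sel, hj])
    rw [this]; exact h _
  rw [avg_PL] at h1
  simp at h1
  exact h1

lemma MM_trunc {n : ℕ} {ε : ℝ} (hε : 0 ≤ ε) (S : Finset (Fin n)) (a : Finset (Fin n) → ℝ) :
    MM ε (fun T => if T ⊆ S then a T else 0) ≤ MM ε a := by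
  unfold MM
  simp only [empty_subset, if_true]
  have : ∑ T ∈ univ.erase ∅, |if T ⊆ S then a T else 0| ≤ ∑ T ∈ univ.erase ∅, |a T| := by
    apply sum_le_sum
    intro T _
    by_cases h : T ⊆ S <;> simp [h]
  have := mul_le_mul_of_nonneg_left this hε
  linarith

lemma uexp_le {n : ℕ} (a : Finset (Fin n) → ℝ) (G : (Fin n → Bool) → ℝ)
    (h : ∀ x, G x ≤ PL a x) : uexp G ≤ a ∅ := by
  have h1 : ∑ y, G y ≤ ∑ y, PL a y := sum_le_sum fun y _ => h y
  have h2 := avg_PL (∅ : Finset (Fin n)) a (fun _ => true)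
  have h3 : ∀ y, sel ∅ (fun _ : Fin n => true) y = y := by intro y; ext; simp [sel]
  simp only [h3] at h2
  rw [h2] at h1
  unfold uexp
  rw [div_le_iff₀ (by positivity)]
  refine h1.trans (le_of_eq ?_)
  simp only [PL, subset_empty, ite_mul, zero_mul, sum_ite_eq', mem_univ, if_true]
  simp [XX, mul_comm]

lemma le_MM {n : ℕ} {ε : ℝ} (hε : 0 ≤ ε) (a : Finset (Fin n) → ℝ) : a ∅ ≤ MM ε a := by
  unfold MM
  have : 0 ≤ ε * ∑ T ∈ univ.erase ∅, |a T| := by positivity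
  linarith

def AA {n : ℕ} (ε : ℝ) (f : (Fin n → Bool) → ℝ) : Set ℝ :=
  {r | ∃ a, (∀ x, f x ≤ PL a x) ∧ r = MM ε a}

lemma AA_bdd {n : ℕ} {ε : ℝ} (hε : 0 ≤ ε) (f : (Fin n → Bool) → ℝ) : BddBelow (AA ε f) :=
  ⟨uexp f, by rintro r ⟨a, ha, rfl⟩; exact (uexp_le a f ha).trans (le_MM hε a)⟩

lemma AA_ne {n : ℕ} (ε : ℝ) (f : (Fin n → Bool) → ℝ) : (AA ε f).Nonempty := by
  refine ⟨_, Pi.single ∅ (∑ y, |f y|), ?_, rfl⟩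
  intro x
  rw [PL_single]
  simp only [XX, prod_empty, mul_one]
  exact (le_abs_self _).trans (single_le_sum (f := fun y => |f y|) (fun _ _ => abs_nonneg _) (mem_univ x))

lemma PA_le {n : ℕ} {ε : ℝ} (hε : 0 ≤ ε) {f : (Fin n → Bool) → ℝ} {a}
    (h : ∀ x, f x ≤ PL a x) : sInf (AA ε f) ≤ MM ε a := csInf_le (AA_bdd hε f) ⟨a, h, rfl⟩

lemma PA_add {n : ℕ} {ε : ℝ} (hε : 0 ≤ ε) (f g : (Fin n → Bool) → ℝ) :
    sInf (AA ε (f + g)) ≤ sInf (AA ε f) + sInf (AA ε g) := by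
  refine le_of_forall_pos_le_add fun η hη => ?_
  obtain ⟨_, ⟨a, ha, rfl⟩, h1⟩ := exists_lt_of_csInf_lt (AA_ne ε f) (lt_add_of_pos_right _ (half_pos hη))
  obtain ⟨_, ⟨b, hb, rfl⟩, h2⟩ := exists_lt_of_csInf_lt (AA_ne ε g) (lt_add_of_pos_right _ (half_pos hη))
  have h3 := PA_le hε (f := f + g) (a := a + b)
    (fun x => by rw [PL_add]; exact add_le_add (ha x) (hb x))
  have h4 := MM_add hε a b
  linarith

lemma PA_smul_le {n : ℕ} {ε : ℝ} (hε : 0 ≤ ε) (c : ℝ) (hc : 0 < c) (f : (Fin n → Bool) → ℝ) :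
    sInf (AA ε (c • f)) ≤ c * sInf (AA ε f) := by
  rw [mul_comm, ← div_le_iff₀ hc]
  refine le_csInf (AA_ne ε f) ?_
  rintro _ ⟨a, ha, rfl⟩
  rw [div_le_iff₀ hc, mul_comm, ← MM_smul c hc.le]
  apply PA_le hε
  intro x
  rw [PL_smul]
  exact mul_le_mul_of_nonneg_left (ha x) hc.le

lemma PA_smul {n : ℕ} {ε : ℝ} (hε : 0 ≤ ε) (c : ℝ) (hc : 0 < c) (f : (Fin n → Bool) → ℝ) :
    sInf (AA ε (c • f)) = c * sInf (AA ε f) := by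
  apply le_antisymm (PA_smul_le hε c hc f)
  have h := PA_smul_le hε c⁻¹ (inv_pos.2 hc) (c • f)
  rw [inv_smul_smul₀ hc.ne'] at h
  rwa [inv_mul_eq_div, le_div_iff₀ hc, mul_comm] at h

lemma exists_dom {n : ℕ} {ε : ℝ} (hε : 0 ≤ ε) (G : (Fin n → Bool) → ℝ) :
    ∃ g : ((Fin n → Bool) → ℝ) →ₗ[ℝ] ℝ, g G = sInf (AA ε G) ∧ ∀ f, g f ≤ sInf (AA ε f) := by
  have h0 : sInf (AA ε (0 : (Fin n → Bool) → ℝ)) = 0 := by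
    have := PA_smul hε 2 (by norm_num) (0 : (Fin n → Bool) → ℝ)
    rw [smul_zero] at this
    linarith
  have H : ∀ c : ℝ, c • G = 0 → (RingHom.id ℝ) c • sInf (AA ε G) = 0 := by
    intro c hc
    rcases smul_eq_zero.1 hc with h | h
    · simp [h]
    · rw [h, h0]; simp
  obtain ⟨g, hg1, hg2⟩ := exists_extension_of_le_sublinear
    (LinearPMap.mkSpanSingleton' (σ := RingHom.id ℝ) G (sInf (AA ε G)) H)
    (fun f => sInf (AA ε f)) (fun c hc x => PA_smul hε c hc x) (PA_add hε) (by
      rintro ⟨x, hx⟩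
      obtain ⟨c, rfl⟩ := Submodule.mem_span_singleton.1 hx
      rw [LinearPMap.mkSpanSingleton'_apply]
      simp only [RingHom.id_apply, smul_eq_mul]
      rcases lt_trichotomy c 0 with h | h | h
      · have h1 := PA_smul hε (-c) (neg_pos.2 h) G
        have h2 := PA_add hε (c • G) ((-c) • G)
        rw [neg_smul, add_neg_cancel, h0, ← neg_smul, h1] at h2
        linarith
      · subst h; simp [h0]
      · rw [PA_smul hε c h])
  refine ⟨g, ?_, hg2⟩
  rw [hg1 ⟨G, Submodule.mem_span_singleton_self G⟩]
  exact LinearPMap.mkSpanSingleton'_apply_self _ _ _ _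

lemma dual {n : ℕ} {ε : ℝ} (hε : 0 ≤ ε) (G : (Fin n → Bool) → ℝ) (c η : ℝ) (hη : 0 < η)
    (h : ∀ ν : (Fin n → Bool) → ℝ, IsBiased ν ε → dExp ν G ≤ c) :
    ∃ a, (∀ x, G x ≤ PL a x) ∧ MM ε a ≤ c + η := by
  obtain ⟨g, hg1, hg2⟩ := exists_dom hε G
  set ν : (Fin n → Bool) → ℝ := fun x => g (fun j => if x = j then 1 else 0) with hν
  have hgν : ∀ f, g f = ∑ x, ν x * f x := by
    intro f
    rw [LinearMap.pi_apply_eq_sum_univ g f]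
    exact sum_congr rfl fun x _ => by rw [smul_eq_mul, mul_comm]
  have key : ∀ f a, (∀ x, f x ≤ PL a x) → g f ≤ MM ε a :=
    fun f a hf => (hg2 f).trans (PA_le hε hf)
  have hb : IsBiased ν ε := by
    refine ⟨?_, ?_, ?_⟩
    · intro x
      have := key (-(fun j => if x = j then 1 else 0)) (Pi.single ∅ 0) (by
        intro y
        rw [PL_single]
        simp only [Pi.neg_apply, zero_mul]
        split_ifs <;> norm_num)
      rw [MM_single_empty, map_neg] at this
      linarith
    · have h1 := key (fun _ => 1) (Pi.single ∅ 1) (by intro y; rw [PL_single]; simp [XX])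
      have h2 := key (fun _ => -1) (Pi.single ∅ (-1)) (by intro y; rw [PL_single]; simp [XX])
      rw [MM_single_empty, hgν] at h1 h2
      simp at h1 h2
      linarith
    · intro T hT
      have h1 := key (fun x => XX T x) (Pi.single T 1) (by intro y; rw [PL_single]; simp)
      have h2 := key (fun x => -XX T x) (Pi.single T (-1)) (by intro y; rw [PL_single]; simp)
      rw [MM_single _ _ hT, hgν] at h1 h2
      simp at h1 h2
      simp only [XX] at h1 h2
      exact abs_le.2 ⟨by linarith, h1⟩
  have h1 := h ν hb
  have h2 : sInf (AA ε G) < c + η := by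
    rw [← hg1, hgν]; unfold dExp at h1; linarith
  obtain ⟨_, ⟨a, ha, rfl⟩, h3⟩ := exists_lt_of_csInf_lt (AA_ne ε G) h2
  exact ⟨a, ha, h3.le⟩

lemma sum_abs_eq {n : ℕ} (a : Finset (Fin n) → ℝ) :
    ∑ T, |a T| = |a ∅| + ∑ T ∈ univ.erase ∅, |a T| :=
  (add_sum_erase univ (fun T => |a T|) (mem_univ ∅)).symm

lemma PL_neg {n : ℕ} (a : Finset (Fin n) → ℝ) (x) : PL (-a) x = - PL a x := by
  simp [PL]

lemma uexp_neg {n : ℕ} (G : (Fin n → Bool) → ℝ) : uexp (fun x => - G x) = - uexp G := by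
  simp [uexp, neg_div]

lemma sandwich {n : ℕ} {ε δ : ℝ} (hε : 0 < ε) (hεδ : ε < δ) (hδ : δ ≤ 1)
    (G : (Fin n → Bool) → ℝ) (hG : ∀ x, 0 ≤ G x ∧ G x ≤ 1) (S : Finset (Fin n))
    (hS : DependsOnlyOn G S)
    (hf : ∀ ν : (Fin n → Bool) → ℝ, IsBiased ν ε → |dExp ν G - uexp G| ≤ δ / 2) :
    ∃ a c : Finset (Fin n) → ℝ, (∀ x, G x ≤ PL a x) ∧ (∀ x, PL a x - PL c x ≤ G x) ∧
      (∀ T, ¬ T ⊆ S → a T = 0) ∧ (∀ T, ¬ T ⊆ S → c T = 0) ∧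
      0 ≤ a ∅ ∧ a ∅ ≤ 2 ∧ 0 ≤ c ∅ ∧ c ∅ ≤ 2 * δ ∧
      ε * ∑ T, |a T| ≤ 2 * δ ∧ ε * ∑ T, |c T| ≤ 2 * δ := by
  have hu0 : 0 ≤ uexp G := by
    unfold uexp
    exact div_nonneg (sum_nonneg fun x _ => (hG x).1) (by positivity)
  have hu1 : uexp G ≤ 1 := by
    unfold uexp
    rw [div_le_one (by positivity)]
    refine (sum_le_sum fun x _ => (hG x).2).trans ?_
    simp
  obtain ⟨a0, ha0, hMa0⟩ := dual hε.le G (uexp G + δ / 2) (δ / 2) (by linarith)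
    (fun ν hν => by linarith [(abs_le.1 (hf ν hν)).2])
  obtain ⟨b0, hb0, hMb0⟩ := dual hε.le (fun x => - G x) (- uexp G + δ / 2) (δ / 2) (by linarith)
    (fun ν hν => by
      have h1 : dExp ν (fun x => - G x) = - dExp ν G := by simp [dExp]
      rw [h1]
      linarith [(abs_le.1 (hf ν hν)).1])
  have ha := trunc S a0 G hS ha0
  have hb := trunc S b0 (fun x => - G x) (fun x y h => by simp only [hS x y h]) hb0
  have hMa := (MM_trunc hε.le S a0).trans hMa0
  have hMb := (MM_trunc hε.le S b0).trans hMb0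
  have has : ∀ T, ¬ T ⊆ S → (fun T => if T ⊆ S then a0 T else 0) T = 0 := fun T h => by simp [h]
  have hbs : ∀ T, ¬ T ⊆ S → (fun T => if T ⊆ S then b0 T else 0) T = 0 := fun T h => by simp [h]
  generalize (fun T => if T ⊆ S then a0 T else 0) = a at *
  generalize (fun T => if T ⊆ S then b0 T else 0) = b at *
  have ea := uexp_le a G ha
  have eb := uexp_le b _ hb
  rw [uexp_neg] at eb
  have hMc := MM_add hε.le a b
  have hc0 : 0 ≤ (a + b) ∅ := by rw [Pi.add_apply]; linarith
  have hMc' : MM ε (a + b) ≤ 2 * δ := by linarith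
  have na : 0 ≤ ε * ∑ T ∈ univ.erase ∅, |a T| := by positivity
  have nc : 0 ≤ ε * ∑ T ∈ univ.erase ∅, |(a + b) T| := by positivity
  refine ⟨a, a + b, ha, ?_, has, ?_, by linarith, ?_, hc0, ?_, ?_, ?_⟩
  · intro x
    rw [PL_add]
    linarith [hb x]
  · intro T hT
    rw [Pi.add_apply, has T hT, hbs T hT, add_zero]
  · unfold MM at hMa
    linarith
  · unfold MM at hMc'
    linarith
  · rw [sum_abs_eq, abs_of_nonneg (by linarith)]
    unfold MM at hMa
    nlinarith [mul_nonneg (sub_nonneg.2 ea) (by linarith : (0:ℝ) ≤ 1 - ε)]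
  · rw [sum_abs_eq, abs_of_nonneg hc0]
    unfold MM at hMc'
    nlinarith [mul_nonneg hc0 (by linarith : (0:ℝ) ≤ 1 - ε)]

lemma prod_fourier {n k : ℕ} {ε : ℝ} (hε : 0 ≤ ε) (S : Fin k → Finset (Fin n))
    (hdisj : ∀ i j, i ≠ j → Disjoint (S i) (S j))
    (a : Fin k → Finset (Fin n) → ℝ) (ha : ∀ i T, ¬ T ⊆ S i → a i T = 0)
    (ν : (Fin n → Bool) → ℝ) (hν : IsBiased ν (ε ^ k)) :
    |dExp ν (fun x => ∏ i, PL (a i) x) - ∏ i, a i ∅| ≤ ∏ i, (ε * ∑ T, |a i T|) := by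
  have h1 : dExp ν (fun x => ∏ i, PL (a i) x) =
      ∑ t : Fin k → Finset (Fin n), (∏ i, a i (t i)) * ∑ x, ν x * ∏ i, XX (t i) x := by
    unfold dExp PL
    simp_rw [prod_univ_sum, Fintype.piFinset_univ, mul_sum]
    rw [sum_comm]
    refine sum_congr rfl fun t _ => sum_congr rfl fun x _ => ?_
    rw [prod_mul_distrib]
    ring
  have h2 : ∏ i, (ε * ∑ T, |a i T|) = ∑ t : Fin k → Finset (Fin n), (∏ i, |a i (t i)|) * ε ^ k := by
    rw [prod_mul_distrib, prod_univ_sum, Fintype.piFinset_univ, ← sum_mul]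
    simp [mul_comm]
  have h3 : ∏ i, a i ∅ = ∑ t : Fin k → Finset (Fin n),
      if t = (fun _ => ∅) then ∏ i, a i (t i) else 0 := by
    simp
  rw [h1, h2, h3, ← sum_sub_distrib]
  refine (abs_sum_le_sum_abs _ _).trans (sum_le_sum fun t _ => ?_)
  split_ifs with ht
  · subst ht
    simp only [XX, prod_empty, prod_const_one, mul_one, hν.2.1, sub_self, abs_zero]
    positivity
  · rw [sub_zero, abs_mul, abs_prod]
    by_cases hz : ∀ i, t i ⊆ S i
    · apply mul_le_mul_of_nonneg_left _ (by positivity)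
      have h4 : ∀ x, ∏ i, XX (t i) x = ∏ j ∈ univ.biUnion t, chi (x j) := by
        intro x
        rw [prod_biUnion]
        · rfl
        · intro i _ j _ hij
          exact (hdisj i j hij).mono (hz i) (hz j)
      simp_rw [h4]
      apply hν.2.2
      by_contra hne
      rw [not_nonempty_iff_eq_empty] at hne
      apply ht
      funext i
      rw [← subset_empty, ← hne]
      exact subset_biUnion_of_mem t (mem_univ i)
    · push Not at hz
      obtain ⟨i, hi⟩ := hz
      have : ∏ i, |a i (t i)| = 0 := prod_eq_zero (mem_univ i) (by rw [ha i _ hi, abs_zero])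
      rw [this]; simp

lemma prod_bound {k : ℕ} {δ : ℝ} (v : Fin k → ℝ) (h0 : ∀ i, 0 ≤ v i) (h2 : ∀ i, v i ≤ 2)
    (j : Fin k) (hj : v j ≤ 2 * δ) : ∏ i, v i ≤ 2 ^ k * δ := by
  have h1 : ∏ i, v i ≤ ∏ i, 2 * (if i = j then δ else 1) := by
    apply prod_le_prod (fun i _ => h0 i)
    intro i _
    split_ifs with h
    · subst h; exact hj
    · simpa using h2 i
  rw [prod_mul_distrib] at h1
  simpa using h1

lemma telescope {ι : Type*} [DecidableEq ι] (s : Finset ι) (u g c : ι → ℝ) (hg : ∀ i, 0 ≤ g i)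
    (hu : ∀ i, g i ≤ u i) (hc : ∀ i, u i - c i ≤ g i) :
    ∏ i ∈ s, u i - ∏ i ∈ s, g i ≤ ∑ j ∈ s, ∏ i ∈ s, (if i = j then c i else u i) := by
  induction s using Finset.induction_on with
  | empty => simp
  | insert b s hb ih =>
    rw [prod_insert hb, prod_insert hb, sum_insert hb, prod_insert hb, if_pos rfl]
    have e1 : ∏ i ∈ s, (if i = b then c i else u i) = ∏ i ∈ s, u i :=
      prod_congr rfl fun i hi => if_neg (ne_of_mem_of_not_mem hi hb)
    have e2 : ∑ j ∈ s, ∏ i ∈ insert b s, (if i = j then c i else u i) =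
        u b * ∑ j ∈ s, ∏ i ∈ s, (if i = j then c i else u i) := by
      rw [mul_sum]
      refine sum_congr rfl fun j hj => ?_
      rw [prod_insert hb, if_neg (ne_of_mem_of_not_mem hj hb).symm]
    rw [e1, e2]
    have hU : 0 ≤ ∏ i ∈ s, u i := prod_nonneg fun i _ => (hg i).trans (hu i)
    have hGU : ∏ i ∈ s, g i ≤ ∏ i ∈ s, u i := prod_le_prod (fun i _ => hg i) (fun i _ => hu i)
    have i1 := mul_le_mul_of_nonneg_left ih ((hg b).trans (hu b))
    have i2 := mul_nonneg (sub_nonneg.2 (hc b)) hU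
    have i3 := mul_nonneg (sub_nonneg.2 (hu b)) (sub_nonneg.2 hGU)
    nlinarith

lemma prod_est {n k : ℕ} {ε δ : ℝ} (hk : 0 < k) (hε : 0 < ε) (hδ : δ ≤ 1) (S : Fin k → Finset (Fin n))
    (hdisj : ∀ i j, i ≠ j → Disjoint (S i) (S j)) (G : Fin k → (Fin n → Bool) → ℝ)
    (hG : ∀ i x, 0 ≤ G i x) (a c : Fin k → Finset (Fin n) → ℝ)
    (h1 : ∀ i x, G i x ≤ PL (a i) x) (h2 : ∀ i x, PL (a i) x - PL (c i) x ≤ G i x)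
    (h3 : ∀ i T, ¬ T ⊆ S i → a i T = 0) (h4 : ∀ i T, ¬ T ⊆ S i → c i T = 0)
    (h5 : ∀ i, 0 ≤ a i ∅) (h6 : ∀ i, a i ∅ ≤ 2) (h7 : ∀ i, 0 ≤ c i ∅) (h8 : ∀ i, c i ∅ ≤ 2 * δ)
    (h9 : ∀ i, ε * ∑ T, |a i T| ≤ 2 * δ) (h10 : ∀ i, ε * ∑ T, |c i T| ≤ 2 * δ)
    (ν : (Fin n → Bool) → ℝ) (hν : IsBiased ν (ε ^ k)) :
    |dExp ν (fun x => ∏ i, G i x) - ∏ i, a i ∅| ≤ (2 * k + 1) * (2 ^ k * δ) := by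
  have A := prod_fourier hε.le S hdisj a h3 ν hν
  have A2 : ∏ i, (ε * ∑ T, |a i T|) ≤ 2 ^ k * δ :=
    prod_bound _ (fun i => by positivity) (fun i => (h9 i).trans (by linarith)) ⟨0, hk⟩ (h9 _)
  have B : dExp ν (fun x => ∏ i, G i x) ≤ dExp ν (fun x => ∏ i, PL (a i) x) :=
    sum_le_sum fun x _ => mul_le_mul_of_nonneg_left
      (prod_le_prod (fun i _ => hG i x) (fun i _ => h1 i x)) (hν.1 x)
  have C : dExp ν (fun x => ∏ i, PL (a i) x) - dExp ν (fun x => ∏ i, G i x) ≤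
      ∑ j, dExp ν (fun x => ∏ i, PL (if i = j then c i else a i) x) := by
    unfold dExp
    rw [sum_comm, ← sum_sub_distrib]
    refine sum_le_sum fun x _ => ?_
    rw [← mul_sub, ← mul_sum]
    apply mul_le_mul_of_nonneg_left _ (hν.1 x)
    have := telescope univ (fun i => PL (a i) x) (fun i => G i x) (fun i => PL (c i) x)
      (fun i => hG i x) (fun i => h1 i x) (fun i => h2 i x)
    refine this.trans (le_of_eq ?_)
    refine sum_congr rfl fun j _ => prod_congr rfl fun i _ => ?_
    split_ifs <;> rfl
  have D : ∀ j, dExp ν (fun x => ∏ i, PL (if i = j then c i else a i) x) ≤ 2 * (2 ^ k * δ) := by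
    intro j
    have D1 := prod_fourier hε.le S hdisj (fun i => if i = j then c i else a i)
      (fun i T hT => by
        split_ifs
        · exact h4 i T hT
        · exact h3 i T hT) ν hν
    have D2 : ∏ i, (ε * ∑ T, |(if i = j then c i else a i) T|) ≤ 2 ^ k * δ := by
      refine prod_bound _ (fun i => by positivity) (fun i => ?_) j (by simpa using h10 j)
      split_ifs
      · exact (h10 i).trans (by linarith)
      · exact (h9 i).trans (by linarith)
    have D3 : ∏ i, (if i = j then c i else a i) ∅ ≤ 2 ^ k * δ := by
      refine prod_bound _ (fun i => ?_) (fun i => ?_) j (by simpa using h8 j)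
      · split_ifs
        · exact h7 i
        · exact h5 i
      · split_ifs
        · exact (h8 i).trans (by linarith)
        · exact h6 i
    have := (abs_le.1 D1).2
    linarith
  have E : ∑ j : Fin k, dExp ν (fun x => ∏ i, PL (if i = j then c i else a i) x) ≤
      k * (2 * (2 ^ k * δ)) := by
    refine (sum_le_sum fun j _ => D j).trans ?_
    simp
  have hδ0 : 0 ≤ 2 ^ k * δ := le_trans (by positivity) A2
  have hk0 : (0:ℝ) ≤ k * (2 ^ k * δ) := by positivity
  have := abs_le.1 A
  rw [abs_le]
  constructor <;> nlinarith

lemma unif_biased {n : ℕ} {δ : ℝ} (hδ : 0 ≤ δ) :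
    IsBiased (fun _ : Fin n → Bool => ((Fintype.card (Fin n → Bool) : ℝ))⁻¹) δ := by
  refine ⟨fun x => by positivity, by simp, ?_⟩
  intro T hT
  rw [← mul_sum]
  have h2 := sum_XX_sel (∅ : Finset (Fin n)) T (fun _ => true)
  have h3 : ∀ y, sel ∅ (fun _ : Fin n => true) y = y := by intro y; ext; simp [sel]
  simp only [h3, subset_empty, hT.ne_empty, if_false, XX] at h2
  rw [h2]
  simpa using hδ

lemma dExp_unif {n : ℕ} (f : (Fin n → Bool) → ℝ) :
    dExp (fun _ : Fin n → Bool => ((Fintype.card (Fin n → Bool) : ℝ))⁻¹) f = uexp f := by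
  unfold dExp uexp
  rw [← mul_sum, mul_comm, div_eq_mul_inv]

lemma interp {k : ℕ} (H : (Fin k → ℝ) → ℝ)
    (hH : ∃ c : Finset (Fin k) → ℝ, ∀ y, H y = ∑ A : Finset (Fin k), c A * ∏ i ∈ A, y i) (y) :
    H y = ∑ s : Fin k → Bool, H (fun i => chi (s i)) * ∏ i, ((1 + chi (s i) * y i) / 2) := by
  obtain ⟨c, hc⟩ := hH
  simp_rw [hc, sum_mul]
  rw [sum_comm]
  refine sum_congr rfl fun A _ => ?_
  simp_rw [mul_assoc, ← mul_sum]
  congr 1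
  have h1 : ∀ z : Fin k → ℝ, ∏ i ∈ A, z i = ∏ i, (if i ∈ A then z i else 1) := by
    intro z; simp [prod_ite_mem]
  simp_rw [h1, ← prod_mul_distrib]
  have h2 := prod_univ_sum (fun _ : Fin k => (univ : Finset Bool))
    (fun i b => (if i ∈ A then chi b else 1) * ((1 + chi b * y i) / 2))
  rw [Fintype.piFinset_univ] at h2
  rw [← h2]
  refine prod_congr rfl fun i _ => ?_
  rw [Fintype.sum_bool]
  split_ifs <;> simp [chi] <;> ring

lemma arith (k : ℕ) : (2 * (k:ℝ) + 1) ≤ 4 ^ k := by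
  induction k with
  | zero => simp
  | succ k ih =>
    push_cast
    rw [pow_succ]
    have : (0:ℝ) ≤ k := by positivity
    linarith

/-- XOR lemma for small-biased distributions: if each of the
`[-1,1]`-valued functions `F i` (on pairwise disjoint sets of variables) is `δ`-fooled
by every `ε`-biased distribution and `H` is multilinear mapping `[-1,1]^k` to
`[-1,1]`, then `H(F₁, …, F_k)` is `16^k · 2δ`-fooled by every `ε^k`-biased
distribution. -/
theorem xor_lemma_small_bias
    (n k : ℕ) (ε δ : ℝ) (hε : 0 < ε) (hεδ : ε < δ) (hδ : δ ≤ 1)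
    (F : Fin k → (Fin n → Bool) → ℝ)
    (hrange : ∀ i x, |F i x| ≤ 1)
    (S : Fin k → Finset (Fin n))
    (hdisj : ∀ i j, i ≠ j → Disjoint (S i) (S j))
    (hdep : ∀ i, DependsOnlyOn (F i) (S i))
    (hfool : ∀ i, ∀ μ : (Fin n → Bool) → ℝ, IsBiased μ ε →
      |dExp μ (F i) - uexp (F i)| ≤ δ)
    (H : (Fin k → ℝ) → ℝ)
    (hH : ∃ c : Finset (Fin k) → ℝ, ∀ y, H y = ∑ A : Finset (Fin k), c A * ∏ i ∈ A, y i)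
    (hHrange : ∀ y : Fin k → ℝ, (∀ i, |y i| ≤ 1) → |H y| ≤ 1) :
    ∀ μ : (Fin n → Bool) → ℝ, IsBiased μ (ε ^ k) →
      |dExp μ (fun x => H (fun i => F i x)) -
          uexp (fun x => H (fun i => F i x))| ≤ 16 ^ k * (2 * δ) := by
  intro μ hμ
  rcases Nat.eq_zero_or_pos k with hk | hk
  · subst hk
    have : ∀ x, H (fun i => F i x) = H 0 := fun x => congrArg H (Subsingleton.elim _ _)
    simp only [this]
    have e1 : dExp μ (fun _ => H 0) = H 0 := by
      unfold dExp; rw [← sum_mul, hμ.2.1, one_mul]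
    have e2 : uexp (fun _ : Fin n → Bool => H 0) = H 0 := by
      simp [uexp]
    rw [e1, e2]
    simp; linarith
  set G : (Fin k → Bool) → Fin k → (Fin n → Bool) → ℝ :=
    fun s i x => (1 + chi (s i) * F i x) / 2 with hGdef
  have hexp : ∀ ν : (Fin n → Bool) → ℝ, dExp ν (fun x => H (fun i => F i x)) =
      ∑ s : Fin k → Bool, H (fun i => chi (s i)) * dExp ν (fun x => ∏ i, G s i x) := by
    intro ν
    unfold dExp
    simp_rw [interp H hH (fun i => F i _), mul_sum]
    rw [sum_comm]
    refine sum_congr rfl fun s _ => sum_congr rfl fun x _ => ?_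
    simp only [hGdef]
    ring
  have hchi : ∀ b, |chi b| = 1 := by intro b; cases b <;> simp [chi]
  have main : ∀ s : Fin k → Bool, ∃ v : ℝ, ∀ ν : (Fin n → Bool) → ℝ, IsBiased ν (ε ^ k) →
      |dExp ν (fun x => ∏ i, G s i x) - v| ≤ (2 * k + 1) * (2 ^ k * δ) := by
    intro s
    have hG01 : ∀ i x, 0 ≤ G s i x ∧ G s i x ≤ 1 := by
      intro i x
      have : |chi (s i) * F i x| ≤ 1 := by rw [abs_mul, hchi, one_mul]; exact hrange i x
      have := abs_le.1 this
      simp only [hGdef]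
      constructor <;> linarith
    have hsand := fun i => sandwich hε hεδ hδ (G s i) (hG01 i) (S i)
      (fun x y h => by simp only [hGdef, hdep i x y h])
      (fun ν hν => by
        have key : ∀ ρ : (Fin n → Bool) → ℝ, ∑ x, ρ x = 1 →
            dExp ρ (G s i) = 1 / 2 + chi (s i) / 2 * dExp ρ (F i) := by
          intro ρ hρ
          unfold dExp
          rw [← hρ, sum_div, mul_sum, ← sum_add_distrib]
          refine sum_congr rfl fun x _ => ?_
          simp only [hGdef]
          ring
        rw [← dExp_unif, key ν hν.2.1, key _ (unif_biased hε.le).2.1, dExp_unif]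
        have e : 1 / 2 + chi (s i) / 2 * dExp ν (F i) - (1 / 2 + chi (s i) / 2 * uexp (F i))
          = chi (s i) * ((dExp ν (F i) - uexp (F i)) / 2) := by ring
        rw [e, abs_mul, hchi, one_mul, abs_div, abs_two]
        linarith [hfool i ν hν])
    choose a c h1 h2 h3 h4 h5 h6 h7 h8 h9 h10 using hsand
    exact ⟨_, fun ν hν => prod_est hk hε hδ S hdisj (G s) (fun i x => (hG01 i x).1) a c
      h1 h2 h3 h4 h5 h6 h7 h8 h9 h10 ν hν⟩
  rw [← dExp_unif, hexp, hexp, ← sum_sub_distrib]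
  refine (abs_sum_le_sum_abs _ _).trans ?_
  have hterm : ∀ s : Fin k → Bool, |H (fun i => chi (s i)) * dExp μ (fun x => ∏ i, G s i x) -
      H (fun i => chi (s i)) * dExp (fun _ : Fin n → Bool =>
        ((Fintype.card (Fin n → Bool) : ℝ))⁻¹) (fun x => ∏ i, G s i x)| ≤
      2 * ((2 * k + 1) * (2 ^ k * δ)) := by
    intro s
    obtain ⟨v, hv⟩ := main s
    have m1 := abs_le.1 (hv μ hμ)
    have m2 := abs_le.1 (hv _ (unif_biased (pow_nonneg hε.le k)))
    rw [← mul_sub, abs_mul]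
    refine (mul_le_of_le_one_left (abs_nonneg _) (hHrange _ fun i => (hchi _).le)).trans ?_
    rw [abs_le]
    constructor <;> linarith
  refine (sum_le_sum fun s _ => hterm s).trans ?_
  simp only [sum_const, card_univ, nsmul_eq_mul, Fintype.card_fun, Fintype.card_bool,
    Fintype.card_fin]
  push_cast
  have e : (16:ℝ) ^ k = 2 ^ k * 4 ^ k * 2 ^ k := by
    rw [← mul_pow, ← mul_pow]; norm_num
  rw [e]
  have hd : (0:ℝ) ≤ 2 ^ k * (2 ^ k * (2 * δ)) := by
    have : 0 ≤ δ := by linarith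
    positivity
  have := mul_le_mul_of_nonneg_right (arith k) hd
  linarith
end

section
/- For any C ≥ 1 the following holds. Any (3,ℓ,m)-ROBP B can be written (as a real-valued function) as B = B' + E where B' is a (3,ℓ,C^ℓ)-ROBP and either E ≡ 0, or for every x, |E(x)| ≤ F(x) where F(x) = ∧_{i=1}^{C^ℓ} ¬F_i(x) and the F_i are non-zero {0,1}-valued events, defined on pairwise disjoint sets of variables, each computable by a (3,ℓ,1)-ROBP. -/
open Finset

/-- The `{0,1}`-valued event `F` is computed by a `(3, ℓ, 1)`-ROBP reading (distinct)
variables from the set `S`. -/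
def Event31 (ℓ : ℕ) {n : ℕ} (S : Finset (Fin n)) (F : (Fin n → Bool) → Prop) : Prop :=
  ∃ (k : ℕ) (σ : Fin k → Fin n), Function.Injective σ ∧ (∀ j, σ j ∈ S) ∧
    ∃ D : ROBP 3 k, D.IsDecomp ℓ 1 ∧
      ∀ x, F x ↔ D.accept (D.run (fun j => x (σ j))) = true

namespace SC
open ROBP
variable {n : ℕ}

def W (B : ROBP 3 n) (i : ℕ) : Finset (Fin 3) := B.V ⟨min i n, by omega⟩
def T (B : ROBP 3 n) (i : ℕ) (b : Bool) (v : Fin 3) : Fin 3 :=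
  if h : i < n then B.trans ⟨i, h⟩ b v else v
def X (x : Fin n → Bool) (i : ℕ) : Bool := if h : i < n then x ⟨i, h⟩ else false

def Co (B : ROBP 3 n) (i : ℕ) : Prop :=
  ∃ (b : Bool) (u v : Fin 3), u ∈ W B i ∧ v ∈ W B i ∧ u ≠ v ∧ T B i b u = T B i b v

theorem W_fin (B : ROBP 3 n) (i : Fin (n+1)) : B.V i = W B i := by
  unfold W; congr 1; ext; simp; omega

theorem W_ne (B : ROBP 3 n) (i : ℕ) : (W B i).Nonempty := B.V_nonempty _

theorem T_fin (B : ROBP 3 n) (i : Fin n) (b v) : B.trans i b v = T B i b v := by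
  simp [T]

theorem X_fin (x : Fin n → Bool) (i : Fin n) : x i = X x i := by simp [X]

theorem T_mem (B : ROBP 3 n) (i : ℕ) (b v) (h : v ∈ W B i) : T B i b v ∈ W B (i+1) := by
  by_cases hi : i < n
  · have := B.trans_mem ⟨i, hi⟩ b v (by rw [W_fin]; simpa using h)
    rw [T_fin, W_fin] at this
    simpa using this
  · simp only [T, hi, dite_false]
    have : W B (i+1) = W B i := by unfold W; congr 2; omega
    rwa [this]

theorem Co_fin (B : ROBP 3 n) (i : Fin n) : B.Colliding i ↔ Co B i := by
  unfold Colliding Co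
  simp only [W_fin, T_fin, Fin.val_castSucc]

theorem run_self (B : ROBP 3 n) (x v) (i j : ℕ) (h : j ≤ i) : B.runTo x v i j = v := by
  rw [runTo, dif_neg]; omega

theorem run_left (B : ROBP 3 n) (x v) (i j : ℕ) (h : i < j) :
    B.runTo x v i j = B.runTo x (T B i (X x i) v) (i+1) j := by
  by_cases hi : i < n
  · rw [runTo, dif_pos ⟨h, hi⟩]; simp [T, X, hi]
  · rw [runTo, dif_neg (by tauto), runTo, dif_neg (by omega)]; simp [T, hi]

theorem run_succ (B : ROBP 3 n) (x) (i d : ℕ) : ∀ v, 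
    B.runTo x v i (i+d+1) = T B (i+d) (X x (i+d)) (B.runTo x v i (i+d)) := by
  induction d generalizing i with
  | zero => intro v; rw [run_left _ _ _ _ _ (by omega), run_self _ _ _ _ _ (by omega), run_self _ _ _ _ _ (by omega)]; rfl
  | succ d ih =>
    intro v
    rw [run_left _ _ _ _ _ (by omega), run_left B x v i (i+(d+1)) (by omega)]
    have := ih (i+1) (T B i (X x i) v)
    have e : i + 1 + d = i + (d+1) := by omega
    rwa [e] at this

theorem run_succ' (B : ROBP 3 n) (x v) (i j : ℕ) (h : i ≤ j) :
    B.runTo x v i (j+1) = T B j (X x j) (B.runTo x v i j) := by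
  obtain ⟨d, rfl⟩ := Nat.exists_eq_add_of_le h
  exact run_succ B x i d v

theorem run_comp (B : ROBP 3 n) (x v) (i j k : ℕ) (h : i ≤ j) (h' : j ≤ k) :
    B.runTo x (B.runTo x v i j) j k = B.runTo x v i k := by
  induction k, h' using Nat.le_induction with
  | base => exact run_self _ _ _ _ _ le_rfl
  | succ k hk ih => rw [run_succ' _ _ _ _ _ hk, run_succ' _ _ _ _ _ (by omega), ih]

theorem run_mem (B : ROBP 3 n) (x v) (i j : ℕ) (h : i ≤ j) (hv : v ∈ W B i) :
    B.runTo x v i j ∈ W B j := by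
  induction j, h using Nat.le_induction with
  | base => rwa [run_self _ _ _ _ _ le_rfl]
  | succ k hk ih => rw [run_succ' _ _ _ _ _ hk]; exact T_mem _ _ _ _ ih

theorem run_congr (B B' : ROBP 3 n) (x x' v) (i j : ℕ) (h : i ≤ j)
    (hT : ∀ k, i ≤ k → k < j → T B k (X x k) = T B' k (X x' k)) :
    B.runTo x v i j = B'.runTo x' v i j := by
  induction j, h using Nat.le_induction with
  | base => rw [run_self _ _ _ _ _ le_rfl, run_self _ _ _ _ _ le_rfl]
  | succ k hk ih =>
    rw [run_succ' _ _ _ _ _ hk, run_succ' _ _ _ _ _ hk, hT k hk (by omega), ih]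
    intro l hl hl'; exact hT l hl (by omega)

/-- combine inputs -/
def mix (a : ℕ) (x y : Fin n → Bool) : Fin n → Bool := fun i => if (i : ℕ) < a then x i else y i

theorem X_mix (a : ℕ) (x y : Fin n → Bool) (i : ℕ) : X (mix a x y) i = if i < a then X x i else X y i := by
  unfold X mix; split_ifs <;> simp_all

theorem run_mix (B : ROBP 3 n) (x y v) (i a j : ℕ) (h : i ≤ a) (h' : a ≤ j) :
    B.runTo (mix a x y) v i j = B.runTo y (B.runTo x v i a) a j := by
  rw [← run_comp B _ v i a j h h', run_congr B B (mix a x y) x v i a h,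
    run_congr B B (mix a x y) y _ a j h']
  · intro k h1 h2; rw [X_mix, if_neg (by omega)]
  · intro k h1 h2; rw [X_mix, if_pos (by omega)]

/-- build from ℕ-indexed data -/
noncomputable def mk (V : ℕ → Finset (Fin 3)) (hV : ∀ i, (V i).Nonempty) (t : ℕ → Bool → Fin 3 → Fin 3)
    (ht : ∀ i b v, i < n → v ∈ V i → t i b v ∈ V (i+1)) (acc : Fin 3 → Bool) : ROBP 3 n where
  V i := V i
  V_nonempty i := hV _
  start := (hV 0).choose
  start_mem := (hV 0).choose_spec
  trans i b v := t i b v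
  trans_mem i b v h := ht i b v i.2 h
  accept := acc

section
variable (V : ℕ → Finset (Fin 3)) (hV : ∀ i, (V i).Nonempty) (t : ℕ → Bool → Fin 3 → Fin 3)
    (ht : ∀ i b v, i < n → v ∈ V i → t i b v ∈ V (i+1)) (acc : Fin 3 → Bool)
theorem W_mk (i : ℕ) (h : i ≤ n) : W (mk V hV t ht acc : ROBP 3 n) i = V i := by
  simp [W, mk, h]
theorem T_mk (i : ℕ) (h : i < n) : T (mk V hV t ht acc : ROBP 3 n) i = t i := by
  ext b v; simp [T, mk, h]
end

theorem card_conv (B : ROBP 3 n) (a b : ℕ) :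
    Nat.card {i : Fin n // a ≤ (i : ℕ) ∧ (i : ℕ) < b ∧ B.Colliding i} =
      Set.ncard {i : ℕ | i < n ∧ a ≤ i ∧ i < b ∧ Co B i} := by
  rw [← Nat.card_coe_set_eq]
  refine Nat.card_congr ⟨fun i => ⟨i.1, i.1.2, i.2.1, i.2.2.1, (Co_fin _ _).1 i.2.2.2⟩,
    fun i => ⟨⟨i.1, i.2.1⟩, i.2.2.1, i.2.2.2.1, (Co_fin _ ⟨i.1, i.2.1⟩).2 i.2.2.2.2⟩, ?_, ?_⟩
  · intro i; rfl
  · intro i; rfl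

def Blk (B : ROBP 3 n) (ℓ a b : ℕ) : Prop := Set.ncard {i : ℕ | i < n ∧ a ≤ i ∧ i < b ∧ Co B i} ≤ ℓ

structure Dec (B : ROBP 3 n) (ℓ m : ℕ) (c : ℕ → ℕ) : Prop where
  mono : Monotone c
  z : c 0 = 0
  l : c m = n
  le : ∀ j, c j ≤ n
  w : ∀ j, j ≤ m → (W B (c j)).card ≤ 2
  blk : ∀ j, j < m → Blk B ℓ (c j) (c (j+1))

theorem dec_of (B : ROBP 3 n) (ℓ m : ℕ) (h : B.IsDecomp ℓ m) : ∃ c, Dec B ℓ m c := by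
  obtain ⟨cut, h1, h2, h3, h4, h5⟩ := h
  refine ⟨fun j => cut ⟨min j m, by omega⟩, ?_, ?_, ?_, ?_, ?_, ?_⟩
  · intro a b hab; apply h1; simp; omega
  · simp [h2]
  · have : (⟨min m m, by omega⟩ : Fin (m+1)) = Fin.last m := by ext; simp
    rw [this, h3]; simp
  · intro j; have := (cut ⟨min j m, by omega⟩).2; omega
  · intro j hj; rw [← W_fin]; exact h4 _
  · intro j hj
    have := h5 ⟨j, hj⟩
    rw [card_conv] at this
    unfold Blk
    have e1 : (⟨min j m, by omega⟩ : Fin (m+1)) = (⟨j, hj⟩ : Fin m).castSucc := by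
      ext; simp; omega
    have e2 : (⟨min (j+1) m, by omega⟩ : Fin (m+1)) = (⟨j, hj⟩ : Fin m).succ := by
      ext; simp; omega
    simp only [e1, e2]
    exact this

theorem of_dec (B : ROBP 3 n) (ℓ m : ℕ) (c : ℕ → ℕ) (h : Dec B ℓ m c) : B.IsDecomp ℓ m := by
  refine ⟨fun j => ⟨c j, by have := h.le j; omega⟩, ?_, ?_, ?_, ?_, ?_⟩
  · intro a b hab; exact h.mono (by simpa using hab)
  · ext; simp [h.z]
  · ext; simp [h.l]
  · intro j; rw [W_fin]; exact h.w j (by omega)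
  · intro j; rw [card_conv]; exact h.blk j j.2

theorem find_blk {m : ℕ} (c : ℕ → ℕ) (hz : c 0 = 0) (i : ℕ) (h : i < c m) :
    ∃ j < m, c j ≤ i ∧ i < c (j+1) := by
  induction m with
  | zero => omega
  | succ m ih =>
    by_cases h' : i < c m
    · obtain ⟨j, h1, h2⟩ := ih h'; exact ⟨j, by omega, h2⟩
    · exact ⟨m, by omega, by omega, h⟩

theorem uniq_blk (c : ℕ → ℕ) (hm : Monotone c) {i j k : ℕ} (h1 : c j ≤ i) (h2 : i < c (j+1))
    (h3 : c k ≤ i) (h4 : i < c (k+1)) : j = k := by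
  rcases lt_trichotomy j k with h | h | h
  · have := hm (show j+1 ≤ k from h); omega
  · exact h
  · have := hm (show k+1 ≤ j from h); omega

theorem regroup (B : ROBP 3 n) (ℓ m M : ℕ) (c : ℕ → ℕ) (h : Dec B ℓ m c) (G : Finset ℕ)
    (hG : G.card ≤ M) (hM : 1 ≤ M)
    (hno : ∀ i j, j < m → j ∉ G → c j ≤ i → i < c (j+1) → ¬ Co B i) : B.IsDecomp ℓ M := by
  classical
  let N : ℕ → ℕ := fun j => (G.filter (· < j)).card
  have N0 : N 0 = 0 := by simp [N]
  have Nmono : Monotone N := by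
    intro a b hab; apply Finset.card_le_card; intro g; simp; intro h1 h2; exact ⟨h1, by omega⟩
  have Nlt : ∀ g ∈ G, ∀ j, g < j → N g + 1 ≤ N j := by
    intro g hg j hj
    have : (insert g (G.filter (· < g))).card ≤ N j := by
      apply Finset.card_le_card; intro a; simp
      rintro (rfl | ⟨h1, h2⟩)
      · exact ⟨hg, hj⟩
      · exact ⟨h1, by omega⟩
    rwa [Finset.card_insert_of_notMem (by simp)] at this
  have Nstep : ∀ j, N (j+1) ≤ N j + 1 := by
    intro j
    have : N (j+1) ≤ (insert j (G.filter (· < j))).card := by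
      apply Finset.card_le_card; intro a; simp; intro h1 h2
      rcases lt_or_eq_of_le (show a ≤ j by omega) with h | h
      · right; exact ⟨h1, h⟩
      · left; exact h
    exact this.trans (Finset.card_insert_le _ _)
  let J : ℕ → ℕ := fun k => if k = 0 then 0 else Nat.findGreatest (fun j => N j ≤ k) m
  have Jle : ∀ k, J k ≤ m := by
    intro k; simp only [J]; split_ifs; · omega
    · exact Nat.findGreatest_le _
  have JN : ∀ k, N (J k) ≤ k := by
    intro k; simp only [J]; split_ifs; · omega
    · exact Nat.findGreatest_spec (P := fun j => N j ≤ k) (m := 0) (by omega) (by omega)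
  have Jmono : Monotone J := by
    intro a b hab
    by_cases ha : a = 0
    · simp [J, ha]
    · have : J b = Nat.findGreatest (fun j => N j ≤ b) m := by simp only [J]; rw [if_neg (by omega)]
      rw [this]
      exact Nat.le_findGreatest (Jle a) ((JN a).trans hab)
  have Jbig : ∀ k, J k < m → k ≤ N (J k) := by
    intro k hk
    by_cases hk0 : k = 0
    · omega
    have e : J k = Nat.findGreatest (fun j => N j ≤ k) m := by simp only [J]; rw [if_neg (by omega)]
    have := Nat.findGreatest_is_greatest (P := fun j => N j ≤ k) (n := m) (k := J k + 1) (by omega) (by omega)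
    have := Nstep (J k)
    omega
  have JM : J M = m := by
    have e : J M = Nat.findGreatest (fun j => N j ≤ M) m := by simp only [J]; rw [if_neg (by omega)]
    apply le_antisymm (Jle _)
    rw [e]
    exact Nat.le_findGreatest le_rfl ((Finset.card_filter_le _ _).trans hG)
  apply of_dec B ℓ M (fun k => c (J k))
  refine ⟨fun a b hab => h.mono (Jmono hab), by simp [J, h.z], by simp only [JM, h.l],
    fun j => h.le _, fun j _ => h.w _ (Jle _), ?_⟩
  intro k hk
  unfold Blk
  -- all collisions lie in a single block
  have key : ∀ i, i < n ∧ c (J k) ≤ i ∧ i < c (J (k+1)) ∧ Co B i →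
      ∃ g ∈ G, g < m ∧ c g ≤ i ∧ i < c (g+1) ∧ J k ≤ g ∧ g < J (k+1) := by
    rintro i ⟨h1, h2, h3, h4⟩
    obtain ⟨g, hg, hg1, hg2⟩ := find_blk (m := m) c h.z i (by rw [h.l]; exact h1)
    refine ⟨g, ?_, hg, hg1, hg2, ?_, ?_⟩
    · by_contra hn; exact hno i g hg hn hg1 hg2 h4
    · by_contra hn; have := h.mono (show g + 1 ≤ J k by omega); omega
    · by_contra hn; have := h.mono (show J (k+1) ≤ g by omega); omega
  rcases Set.eq_empty_or_nonempty {i : ℕ | i < n ∧ c (J k) ≤ i ∧ i < c (J (k+1)) ∧ Co B i} with he | ⟨i0, hi0⟩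
  · rw [he]; simp
  obtain ⟨g, hgG, hgm, hg1, hg2, hg3, hg4⟩ := key i0 hi0
  refine le_trans (Set.ncard_le_ncard ?_ ?_) (h.blk g hgm)
  · intro i hi
    obtain ⟨g', hgG', hgm', hg1', hg2', hg3', hg4'⟩ := key i hi
    have hb := Jbig k (by omega)
    have : g' = g := by
      have a1 := JN (k+1)
      rcases lt_trichotomy g g' with hh | hh | hh
      · have := Nlt g hgG g' hh; have := Nlt g' hgG' _ hg4'; have := Nmono hg3; omega
      · exact hh.symm
      · have := Nlt g' hgG' g hh; have := Nlt g hgG _ hg4; have := Nmono hg3'; omega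
    subst this
    exact ⟨hi.1, hg1', hg2', hi.2.2.2⟩
  · exact (Set.finite_lt_nat n).subset (fun i hi => hi.1)

theorem fin3_aux : ∀ (f : Fin 3 → Fin 3) (w w' : Fin 3), w ≠ w' →
    -(f (w+1) + f (w+2)) = -(f (w'+1) + f (w'+2)) → ∃ u v, u ≠ v ∧ f u = f v := by decide

theorem fin3_pair : ∀ u v : Fin 3, u ≠ v →
    (-(u+v) + 1 = u ∧ -(u+v)+2 = v) ∨ (-(u+v) + 1 = v ∧ -(u+v)+2 = u) := by decide

theorem fin3_cover : ∀ w w' u : Fin 3, w ≠ w' → u = w+1 ∨ u = w+2 ∨ u = w'+1 ∨ u = w'+2 := by decide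

theorem pair_fun (f : Fin 3 → Fin 3) (u v : Fin 3) (h : u ≠ v) :
    -(f (-(u+v)+1) + f (-(u+v)+2)) = -(f u + f v) ∧
    (f (-(u+v)+1) = f (-(u+v)+2) ↔ f u = f v) := by
  rcases fin3_pair u v h with ⟨h1, h2⟩ | ⟨h1, h2⟩ <;> rw [h1, h2]
  · simp
  · rw [add_comm]; simp [eq_comm]

theorem event (B : ROBP 3 n) (ℓ a b : ℕ) (hab : a ≤ b) (hb : b ≤ n) (hcard : (W B a).card ≤ 2)
    (hblk : Blk B ℓ a b)
    (hx : ∃ x, ∀ u ∈ W B a, ∀ v ∈ W B a, B.runTo x u a b = B.runTo x v a b) :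
    ∃ F : (Fin n → Bool) → Prop, (∃ x, F x) ∧
      Event31 ℓ (Finset.univ.filter (fun i : Fin n => a ≤ (i:ℕ) ∧ (i:ℕ) < b)) F ∧
      ∀ x, F x → ∀ u ∈ W B a, ∀ v ∈ W B a, B.runTo x u a b = B.runTo x v a b := by
  classical
  by_cases hs : ∀ u ∈ W B a, ∀ v ∈ W B a, u = v
  · refine ⟨fun _ => True, ⟨fun _ => true, trivial⟩, ?_, ?_⟩
    · refine ⟨0, Fin.elim0, fun i => i.elim0, fun i => i.elim0,
        mk (fun _ => {0}) (by simp) (fun _ _ _ => 0) (by simp) (fun _ => true), ?_, ?_⟩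
      · apply of_dec _ _ _ (fun _ => 0)
        refine ⟨fun _ _ _ => le_rfl, rfl, rfl, fun _ => le_rfl, ?_, ?_⟩
        · intro j _; rw [W_mk _ _ _ _ _ _ (by omega)]; simp
        · intro j _; unfold Blk; simp
      · intro x; simp [mk]
    · intro x _ u hu v hv; rw [hs u hu v hv]
  push Not at hs
  obtain ⟨p, hp, q, hq, hpq⟩ := hs
  have hW : W B a = {p, q} := by
    symm; apply Finset.eq_of_subset_of_card_le
    · intro u; simp; rintro (rfl | rfl) <;> assumption
    · rw [Finset.card_pair hpq]; exact hcard
  obtain ⟨x0, hx0⟩ := hx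
  have hex : ∃ k, ∃ x, B.runTo x p a (a+k) = B.runTo x q a (a+k) := by
    refine ⟨b - a, x0, ?_⟩
    rw [show a + (b-a) = b by omega]; exact hx0 p hp q hq
  let k := Nat.find hex
  have hk : ∃ x, B.runTo x p a (a+k) = B.runTo x q a (a+k) := Nat.find_spec hex
  have hmin : ∀ t < k, ∀ x, B.runTo x p a (a+t) ≠ B.runTo x q a (a+t) := by
    intro t ht x h; exact Nat.find_min hex ht ⟨x, h⟩
  have hkb : a + k ≤ b := by
    have : k ≤ b - a := Nat.find_min' hex ⟨x0, by rw [show a + (b-a) = b by omega]; exact hx0 p hp q hq⟩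
    omega
  have hk0 : 0 < k := by
    rcases Nat.eq_zero_or_pos k with h | h
    · rw [h] at hk; obtain ⟨x, hx⟩ := hk
      rw [run_self _ _ _ _ _ (by omega), run_self _ _ _ _ _ (by omega)] at hx
      exact absurd hx hpq
    · exact h
  clear_value k
  let st : (Fin n → Bool) → ℕ → Fin 3 := fun x t => -(B.runTo x p a (a+t) + B.runTo x q a (a+t))
  let V : ℕ → Finset (Fin 3) := fun t =>
    if t < k then Finset.univ.filter (fun w => ∃ x, st x t = w) else {0, 1}
  let tr : ℕ → Bool → Fin 3 → Fin 3 := fun t β w =>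
    if t + 1 < k then -(T B (a+t) β (w+1) + T B (a+t) β (w+2))
    else if T B (a+t) β (w+1) = T B (a+t) β (w+2) then 0 else 1
  have hst : ∀ x t, t + 1 < k → tr t (X x (a+t)) (st x t) = st x (t+1) := by
    intro x t ht
    simp only [tr, if_pos ht, st]
    rw [(pair_fun _ _ _ (hmin t (by omega) x)).1, ← add_assoc, run_succ' _ _ _ _ _ (by omega),
      run_succ' _ _ _ _ _ (by omega)]
  have hV : ∀ i, (V i).Nonempty := by
    intro i; simp only [V]; split_ifs
    · exact ⟨st x0 i, by simp⟩
    · simp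
  have htr : ∀ i β v, i < k → v ∈ V i → tr i β v ∈ V (i+1) := by
    intro i β v hi hv
    by_cases h : i + 1 < k
    · simp only [V, if_pos hi] at hv
      simp only [Finset.mem_filter, Finset.mem_univ, true_and] at hv
      obtain ⟨x, rfl⟩ := hv
      simp only [V, if_pos h]
      simp only [Finset.mem_filter, Finset.mem_univ, true_and]
      refine ⟨mix (a+i) x (fun _ => β), ?_⟩
      have e := hst (mix (a+i) x (fun _ => β)) i h
      have e2 : st (mix (a+i) x (fun _ => β)) i = st x i := by
        simp only [st]
        rw [run_mix _ _ _ _ _ _ _ (by omega) le_rfl, run_mix _ _ _ _ _ _ _ (by omega) le_rfl,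
          run_self _ _ _ _ _ le_rfl, run_self _ _ _ _ _ le_rfl]
      rw [e2, X_mix, if_neg (by omega)] at e
      have : X (fun _ : Fin n => β) (a+i) = β := by
        unfold X; rw [dif_pos (by omega)]
      rw [this] at e
      exact e.symm
    · simp only [V, if_neg h, tr]
      split_ifs <;> simp
  let D : ROBP 3 k := mk V hV tr htr (fun v => decide (v = 0))
  have hfin : ∀ x, tr (k-1) (X x (a+(k-1))) (st x (k-1)) = 0 ↔ B.runTo x p a (a+k) = B.runTo x q a (a+k) := by
    intro x
    simp only [tr, if_neg (show ¬ (k - 1 + 1 < k) by omega), st]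
    have := (pair_fun (T B (a+(k-1)) (X x (a+(k-1)))) _ _ (hmin (k-1) (by omega) x)).2
    rw [← run_succ' _ _ _ _ _ (by omega), ← run_succ' _ _ _ _ _ (by omega),
      show a + (k-1) + 1 = a + k by omega] at this
    rw [← this]
    split_ifs with h
    · exact ⟨fun _ => h, fun _ => rfl⟩
    · exact ⟨fun h' => absurd h' (by decide), fun h' => absurd h' h⟩
  refine ⟨fun x => B.runTo x p a (a+k) = B.runTo x q a (a+k), hk, ?_, ?_⟩
  · refine ⟨k, fun j => ⟨a + j, by have := j.2; omega⟩, ?_, ?_, D, ?_, ?_⟩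
    · intro i j h; ext; simpa using h
    · intro j; have := j.2; simp; omega
    · apply of_dec _ _ _ (fun j => if j = 0 then 0 else k)
      refine ⟨?_, by simp, by simp, ?_, ?_, ?_⟩
      · intro i j hij; show (if i = 0 then 0 else k) ≤ (if j = 0 then 0 else k); split_ifs <;> omega
      · intro j; split_ifs <;> omega
      · intro j hj
        split_ifs
        · rw [W_mk _ _ _ _ _ _ (by omega)]
          simp only [V, if_pos hk0]
          have : ∀ x, st x 0 = -(p+q) := by
            intro x; simp only [st]
            rw [run_self _ _ _ _ _ (by omega), run_self _ _ _ _ _ (by omega)]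
          simp only [this]
          refine (Finset.card_le_one.2 ?_).trans (by norm_num)
          simp
        · rw [W_mk _ _ _ _ _ _ (by omega)]
          simp [V]
      · intro j hj
        obtain rfl : j = 0 := by omega
        simp only [if_true, zero_add, if_neg one_ne_zero]
        refine le_trans ?_ hblk
        refine Set.ncard_le_ncard_of_injOn (fun t => a + t) ?_ ?_ ?_
        · rintro t ⟨ht, -, -, β, w, w', hw, hw', hne, heq⟩
          refine ⟨by omega, by simp, by show a + t < b; omega, ?_⟩
          rw [W_mk _ _ _ _ _ _ (by omega)] at hw hw'
          rw [T_mk _ _ _ _ _ _ (by omega)] at heq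
          have mem : ∀ w ∈ V t, w+1 ∈ W B (a+t) ∧ w+2 ∈ W B (a+t) := by
            intro w hw
            simp only [V, if_pos ht] at hw
            simp only [Finset.mem_filter, Finset.mem_univ, true_and] at hw
            obtain ⟨x, rfl⟩ := hw
            have m1 := run_mem B x p a (a+t) (by omega) hp
            have m2 := run_mem B x q a (a+t) (by omega) hq
            simp only [st]
            rcases fin3_pair _ _ (hmin t ht x) with ⟨h1, h2⟩ | ⟨h1, h2⟩ <;> rw [h1, h2]
            · exact ⟨m1, m2⟩
            · exact ⟨m2, m1⟩
          by_cases h : t + 1 < k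
          · simp only [tr, if_pos h] at heq
            obtain ⟨u, v, huv, hf⟩ := fin3_aux _ w w' hne heq
            have all : ∀ u, u ∈ W B (a+t) := by
              intro u
              rcases fin3_cover w w' u hne with rfl | rfl | rfl | rfl
              · exact (mem w hw).1
              · exact (mem w hw).2
              · exact (mem w' hw').1
              · exact (mem w' hw').2
            exact ⟨β, u, v, all u, all v, huv, hf⟩
          · obtain ⟨x, hx⟩ := hk
            have e : k = t + 1 := by omega
            rw [e, ← add_assoc, run_succ' _ _ _ _ _ (by omega), run_succ' _ _ _ _ _ (by omega)] at hx
            exact ⟨X x (a+t), _, _, run_mem B x p a (a+t) (by omega) hp,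
              run_mem B x q a (a+t) (by omega) hq, hmin t ht x, hx⟩
        · intro i _ j _ h; simpa using h
        · exact (Set.finite_lt_nat n).subset (fun i hi => hi.1)
    · intro x
      have hXX : ∀ t < k, X (fun j : Fin k => x ⟨a + j, by have := j.2; omega⟩) t = X x (a+t) := by
        intro t ht; unfold X; rw [dif_pos ht, dif_pos (by omega)]
      have hrun : ∀ t < k, D.runTo (fun j : Fin k => x ⟨a + j, by have := j.2; omega⟩) D.start 0 t = st x t := by
        intro t
        induction t with
        | zero =>
          intro _
          rw [run_self _ _ _ _ _ le_rfl]
          have := D.start_mem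
          rw [W_fin, W_mk _ _ _ _ _ _ (by simp)] at this
          simp only [V, Fin.val_zero, if_pos hk0] at this
          simp only [Finset.mem_filter, Finset.mem_univ, true_and] at this
          obtain ⟨y, hy⟩ := this
          rw [← hy]; simp only [st]
          simp [run_self]
        | succ t ih =>
          intro ht
          rw [run_succ' _ _ _ _ _ (by omega), ih (by omega), hXX t (by omega),
            T_mk _ _ _ _ _ _ (by omega), hst x t ht]
      have : D.run (fun j : Fin k => x ⟨a + j, by have := j.2; omega⟩) = tr (k-1) (X x (a+(k-1))) (st x (k-1)) := by
        unfold ROBP.run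
        have e := run_succ' D (fun j : Fin k => x ⟨a + j, by have := j.2; omega⟩) D.start 0 (k-1) (by omega)
        rw [hrun (k-1) (by omega), hXX (k-1) (by omega), T_mk _ _ _ _ _ _ (by omega)] at e
        rw [← e]; congr 1; omega
      rw [this]
      show (B.runTo x p a (a+k) = B.runTo x q a (a+k)) ↔ _
      rw [← hfin]
      simp [D, mk]
  · intro x hF u hu v hv
    have : B.runTo x p a b = B.runTo x q a b := by
      rw [← run_comp B x p a (a+k) b (by omega) hkb, hF, run_comp B x q a (a+k) b (by omega) hkb]
    rw [hW] at hu hv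
    simp at hu hv
    rcases hu with rfl | rfl <;> rcases hv with rfl | rfl <;> simp [this]

theorem avg_W (B : ROBP 3 n) (x) : B.avgEval x =
    (∑ v ∈ W B 0, (if B.accept (B.runTo x v 0 n) then (-1 : ℝ) else 1)) / ((W B 0).card : ℝ) := by
  unfold avgEval; rw [W_fin]; rfl

theorem two_vals {Q : Finset (Fin 3)} (hQ : Q.card ≤ 2) {a b s : Fin 3} (ha : a ∈ Q) (hb : b ∈ Q)
    (hab : a ≠ b) (hs : s ∈ Q) : s = a ∨ s = b := by
  have : ({a, b} : Finset (Fin 3)) = Q := by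
    apply Finset.eq_of_subset_of_card_le
    · intro u; simp; rintro (rfl | rfl) <;> assumption
    · rw [Finset.card_pair hab]; exact hQ
  rw [← this] at hs; simpa using hs

theorem fin3_third : ∀ u1 v1 u2 v2 : Fin 3, u1 ≠ u2 → u1 ≠ v1 → u2 ≠ v2 → u1 ≠ v2 → u2 ≠ v1 →
    v1 = v2 := by decide

theorem col (f g : Fin 3 → Fin 3) (Q : Finset (Fin 3)) (hQ : Q.card ≤ 2) (E : Fin 3 → Fin 3 → Prop)
    (hE : ∀ u v, E u v → f u ≠ f v ∧ g u ≠ g v ∧ g u ∈ Q ∧ g v ∈ Q) {u1 v1 u2 v2 : Fin 3}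
    (h1 : E u1 v1) (h2 : E u2 v2) (h : f u1 = f u2) : g u1 = g u2 := by
  by_cases hu : u1 = u2
  · rw [hu]
  obtain ⟨a1, a2, a3, a4⟩ := hE _ _ h1
  obtain ⟨b1, b2, b3, b4⟩ := hE _ _ h2
  have hv : v1 = v2 := by
    apply fin3_third u1 v1 u2 v2 hu
    · rintro rfl; exact a1 rfl
    · rintro rfl; exact b1 rfl
    · rintro rfl; exact b1 h.symm
    · rintro rfl; exact a1 h
  subst hv
  rcases two_vals hQ a3 a4 a2 b3 with h | h
  · exact h.symm
  · exact absurd h b2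

/-- the abstract transition lemma -/
theorem exists_tau (f g : Fin 3 → Fin 3) (P Q : Finset (Fin 3)) (hP : P.card ≤ 2) (hQ : Q.card ≤ 2)
    (E : Fin 3 → Fin 3 → Prop) (hs : ∀ u v, E u v → E v u) (hne : ∃ u v, E u v)
    (hE : ∀ u v, E u v → f u ≠ f v ∧ g u ≠ g v ∧ g u ∈ Q ∧ g v ∈ Q)
    (hf : ∀ u v, E u v → f u ∈ P) :
    ∃ τ : Fin 3 → Fin 3, (∀ u v, E u v → τ (f u) = g u) ∧ (∀ s ∈ P, τ s ∈ Q) ∧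
      ∀ s ∈ P, ∀ s' ∈ P, τ s = τ s' → s = s' := by
  classical
  let τ : Fin 3 → Fin 3 := fun s => if h : ∃ u v, E u v ∧ f u = s then g h.choose else 0
  have h1 : ∀ u v, E u v → τ (f u) = g u := by
    intro u v huv
    have h : ∃ u' v', E u' v' ∧ f u' = f u := ⟨u, v, huv, rfl⟩
    simp only [τ, dif_pos h]
    obtain ⟨v', h2, h3⟩ := h.choose_spec
    exact col f g Q hQ E hE h2 huv h3
  obtain ⟨u, v, huv⟩ := hne
  have hvu := hs _ _ huv
  have cov : ∀ s ∈ P, s = f u ∨ s = f v := fun s hs' =>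
    two_vals hP (hf _ _ huv) (hf _ _ hvu) (hE _ _ huv).1 hs'
  obtain ⟨a1, a2, a3, a4⟩ := hE _ _ huv
  refine ⟨τ, h1, ?_, ?_⟩
  · intro s hs'
    rcases cov s hs' with rfl | rfl
    · rw [h1 _ _ huv]; exact a3
    · rw [h1 _ _ hvu]; exact a4
  · intro s hs' s' hs'' h
    rcases cov s hs' with rfl | rfl <;> rcases cov s' hs'' with rfl | rfl
    · rfl
    · rw [h1 _ _ huv, h1 _ _ hvu] at h; exact absurd h a2
    · rw [h1 _ _ huv, h1 _ _ hvu] at h; exact absurd h.symm a2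
    · rfl

theorem normalize (B : ROBP 3 n) (ℓ m : ℕ) (c : ℕ → ℕ) (h : Dec B ℓ m c) :
    ∃ B1 : ROBP 3 n, Dec B1 ℓ m c ∧ (∀ x, B.avgEval x = B1.avgEval x) ∧
      ∀ j < m, (∀ i, c j ≤ i → i < c (j+1) → ¬ Co B1 i) ∨
        ∃ x, ∀ u ∈ W B1 (c j), ∀ v ∈ W B1 (c j),
          B1.runTo x u (c j) (c (j+1)) = B1.runTo x v (c j) (c (j+1)) := by
  classical
  let Bad : ℕ → Prop := fun j => ∀ x, ∃ u ∈ W B (c j), ∃ v ∈ W B (c j),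
    B.runTo x u (c j) (c (j+1)) ≠ B.runTo x v (c j) (c (j+1))
  have hmono := h.mono
  let e : ℕ → ℕ := fun i =>
    if h : ∃ j, j < m ∧ Bad j ∧ c j < i ∧ i < c (j+1) then c (h.choose+1) else i
  have e_cut : ∀ j, e (c j) = c j := by
    intro j
    simp only [e]
    rw [dif_neg]
    rintro ⟨k, -, -, h1, h2⟩
    have := hmono.reflect_lt h1
    have := hmono.reflect_lt h2
    omega
  have e_bad : ∀ j i, j < m → Bad j → c j < i → i ≤ c (j+1) → e i = c (j+1) := by
    intro j i hj hb h1 h2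
    rcases lt_or_eq_of_le h2 with h3 | rfl
    · have hh : ∃ j, j < m ∧ Bad j ∧ c j < i ∧ i < c (j+1) := ⟨j, hj, hb, h1, h3⟩
      simp only [e, dif_pos hh]
      obtain ⟨_, _, h4, h5⟩ := hh.choose_spec
      rw [uniq_blk c hmono h1.le h3 h4.le h5]
    · exact e_cut _
  have e_good : ∀ j i, ¬ Bad j → c j ≤ i → i ≤ c (j+1) → e i = i := by
    intro j i hb h1 h2
    rcases lt_or_eq_of_le h2 with h3 | rfl
    · simp only [e]
      rw [dif_neg]
      rintro ⟨k, -, hk, h4, h5⟩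
      rw [uniq_blk c hmono h1 h3 h4.le h5] at hb
      exact hb hk
    · exact e_cut _
  have e_ge : ∀ i, i ≤ e i := by
    intro i; simp only [e]; split_ifs with hh
    · exact hh.choose_spec.2.2.2.le
    · exact le_rfl
  let z : Fin n → Bool := fun _ => true
  let r : ℕ → Fin 3 → Fin 3 := fun i v => B.runTo z v i (e i)
  have r_id : ∀ i, e i = i → ∀ v, r i v = v := by
    intro i hi v; simp only [r]; rw [run_self]; omega
  have bad_pair : ∀ j, j < m → Bad j → ∃ p q, p ∈ W B (c j) ∧ q ∈ W B (c j) ∧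
      (∀ u ∈ W B (c j), u = p ∨ u = q) ∧
      ∀ x, B.runTo x p (c j) (c (j+1)) ≠ B.runTo x q (c j) (c (j+1)) := by
    intro j hj hb
    obtain ⟨p, hp, q, hq, hpq⟩ := hb z
    have hne : p ≠ q := by rintro rfl; exact hpq rfl
    have cov := fun u (hu : u ∈ W B (c j)) => two_vals (h.w j hj.le) hp hq hne hu
    refine ⟨p, q, hp, hq, cov, ?_⟩
    intro x hx
    obtain ⟨u, hu, v, hv, huv⟩ := hb x
    rcases cov u hu with rfl | rfl <;> rcases cov v hv with rfl | rfl
    · exact huv rfl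
    · exact huv hx
    · exact huv hx.symm
    · exact huv rfl
  have step : ∀ i β, ∃ τ : Fin 3 → Fin 3, i < n →
      ((∀ x, ∀ v ∈ W B 0, τ (r i (B.runTo x v 0 i)) = r (i+1) (T B i β (B.runTo x v 0 i))) ∧
      (∀ s ∈ W B (e i), τ s ∈ W B (e (i+1))) ∧
      ∀ j < m, c j ≤ i → i < c (j+1) →
        (¬ Bad j → τ = T B i β) ∧
        (Bad j → ∀ s ∈ W B (e i), ∀ s' ∈ W B (e i), τ s = τ s' → s = s')) := by
    intro i β
    by_cases hi : i < n
    swap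
    · exact ⟨id, fun h => absurd h hi⟩
    obtain ⟨j, hj, h1, h2⟩ := find_blk (m := m) c h.z i (by rw [h.l]; exact hi)
    by_cases hb : Bad j
    · obtain ⟨p, q, hp, hq, cov, hpq⟩ := bad_pair j hj hb
      have ei1 : e (i+1) = c (j+1) := e_bad j (i+1) hj hb (by omega) (by omega)
      have cardP : (W B (e i)).card ≤ 2 := by
        rcases lt_or_eq_of_le h1 with h3 | h3
        · rw [e_bad j i hj hb h3 h2.le]; exact h.w _ hj
        · rw [← h3, e_cut]; exact h.w _ hj.le
      let E : Fin 3 → Fin 3 → Prop := fun u v => ∃ x,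
        (u = B.runTo x p (c j) i ∧ v = B.runTo x q (c j) i) ∨
        (u = B.runTo x q (c j) i ∧ v = B.runTo x p (c j) i)
      have hf : ∀ x, r i (B.runTo x p (c j) i) ≠ r i (B.runTo x q (c j) i) := by
        intro x
        rcases lt_or_eq_of_le h1 with h3 | h3
        · simp only [r]
          rw [e_bad j i hj hb h3 h2.le, ← run_mix _ _ _ _ _ _ _ h1 h2.le, ← run_mix _ _ _ _ _ _ _ h1 h2.le]
          exact hpq _
        · rw [r_id i (by rw [← h3, e_cut]), r_id i (by rw [← h3, e_cut]), run_self _ _ _ _ _ h3.ge,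
            run_self _ _ _ _ _ h3.ge]
          rintro rfl; exact hpq z rfl
      have hTT : ∀ x v, T B i β (B.runTo x v (c j) i) = B.runTo (mix i x (fun _ => β)) v (c j) (i+1) := by
        intro x v
        rw [run_mix _ _ _ _ _ _ _ h1 (by omega), run_succ' _ _ _ _ _ le_rfl, run_self B _ _ i i le_rfl]
        simp [X, hi]
      have hg : ∀ x, r (i+1) (T B i β (B.runTo x p (c j) i)) ≠ r (i+1) (T B i β (B.runTo x q (c j) i)) := by
        intro x
        simp only [r]
        rw [ei1, hTT, hTT, ← run_mix _ _ _ _ _ _ _ (by omega) (by omega), ← run_mix _ _ _ _ _ _ _ (by omega) (by omega)]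
        exact hpq _
      have hgm : ∀ x v, v ∈ W B (c j) → r (i+1) (T B i β (B.runTo x v (c j) i)) ∈ W B (c (j+1)) := by
        intro x v hv
        simp only [r]; rw [ei1]
        exact run_mem _ _ _ _ _ (by omega) (T_mem _ _ _ _ (run_mem _ _ _ _ _ h1 hv))
      have hfm : ∀ x v, v ∈ W B (c j) → r i (B.runTo x v (c j) i) ∈ W B (e i) := by
        intro x v hv
        exact run_mem _ _ _ _ _ (e_ge i) (run_mem _ _ _ _ _ h1 hv)
      obtain ⟨τ, t1, t2, t3⟩ := exists_tau (r i) (fun u => r (i+1) (T B i β u)) (W B (e i))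
        (W B (c (j+1))) cardP (h.w _ hj) E (by rintro u v ⟨x, hx | hx⟩ 
                                               · exact ⟨x, Or.inr hx.symm⟩
                                               · exact ⟨x, Or.inl hx.symm⟩)
        ⟨_, _, z, Or.inl ⟨rfl, rfl⟩⟩ (by
          rintro u v ⟨x, ⟨rfl, rfl⟩ | ⟨rfl, rfl⟩⟩
          · exact ⟨hf x, hg x, hgm x p hp, hgm x q hq⟩
          · exact ⟨(hf x).symm, (hg x).symm, hgm x q hq, hgm x p hp⟩) (by
          rintro u v ⟨x, ⟨rfl, rfl⟩ | ⟨rfl, rfl⟩⟩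
          · exact hfm x p hp
          · exact hfm x q hq)
      refine ⟨τ, fun _ => ⟨?_, ?_, ?_⟩⟩
      · intro x v hv
        rw [← run_comp B x v 0 (c j) i (by omega) h1]
        rcases cov _ (run_mem B x v 0 (c j) (by omega) hv) with h4 | h4 <;> rw [h4]
        · exact t1 _ _ ⟨x, Or.inl ⟨rfl, rfl⟩⟩
        · exact t1 _ _ ⟨x, Or.inr ⟨rfl, rfl⟩⟩
      · rw [ei1]; exact t2
      · intro k hk h3 h4
        have := uniq_blk c hmono h1 h2 h3 h4
        subst this
        exact ⟨fun hn => absurd hb hn, fun _ => t3⟩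
    · have e1 := e_good j i hb h1 h2.le
      have e2 := e_good j (i+1) hb (by omega) (by omega)
      refine ⟨T B i β, fun _ => ⟨?_, ?_, ?_⟩⟩
      · intro x v hv; rw [r_id _ e1, r_id _ e2]
      · rw [e1, e2]; intro s hs; exact T_mem _ _ _ _ hs
      · intro k hk h3 h4
        have := uniq_blk c hmono h1 h2 h3 h4
        subst this
        exact ⟨fun _ => rfl, fun hn => absurd hn hb⟩
  choose τ hτ using step
  let B1 : ROBP 3 n := mk (fun i => W B (e i)) (fun i => W_ne _ _) τ
    (fun i b v hi hv => (hτ i b hi).2.1 v hv) B.accept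
  have W1 : ∀ i ≤ n, W B1 i = W B (e i) := fun i hi => W_mk _ _ _ _ _ _ hi
  have T1 : ∀ i < n, T B1 i = τ i := fun i hi => T_mk _ _ _ _ _ _ hi
  have Wc : ∀ j, W B1 (c j) = W B (c j) := by intro j; rw [W1 _ (h.le j), e_cut]
  have e0 : e 0 = 0 := by have := e_cut 0; rwa [h.z] at this
  have en : e n = n := by have := e_cut m; rwa [h.l] at this
  have W0 : W B1 0 = W B 0 := by rw [W1 _ (by omega), e0]
  have hrun : ∀ x, ∀ v ∈ W B 0, ∀ i ≤ n, B1.runTo x v 0 i = r i (B.runTo x v 0 i) := by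
    intro x v hv i
    induction i with
    | zero => intro _; rw [r_id _ e0, run_self _ _ _ _ _ le_rfl, run_self _ _ _ _ _ le_rfl]
    | succ i ih =>
      intro hi
      rw [run_succ' _ _ _ _ _ (by omega), ih (by omega), T1 i (by omega),
        (hτ i _ (by omega)).1 x v hv, run_succ' B _ _ _ _ (by omega)]
  have noC : ∀ j < m, Bad j → ∀ i, c j ≤ i → i < c (j+1) → ¬ Co B1 i := by
    rintro j hj hb i h1 h2 ⟨β, u, v, hu, hv, huv, ht⟩
    have hi : i < n := by have := h.le (j+1); omega
    rw [W1 i hi.le] at hu hv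
    rw [T1 i hi] at ht
    exact huv (((hτ i β hi).2.2 j hj h1 h2).2 hb u hu v hv ht)
  have Tg : ∀ j < m, ¬ Bad j → ∀ i, c j ≤ i → i < c (j+1) → T B1 i = T B i := by
    intro j hj hb i h1 h2
    have hi : i < n := by have := h.le (j+1); omega
    rw [T1 i hi]; funext β
    exact ((hτ i β hi).2.2 j hj h1 h2).1 hb
  refine ⟨B1, ⟨hmono, h.z, h.l, h.le, ?_, ?_⟩, ?_, ?_⟩
  · intro j hj; rw [Wc]; exact h.w j hj
  · intro j hj
    by_cases hb : Bad j
    · unfold Blk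
      have : {i : ℕ | i < n ∧ c j ≤ i ∧ i < c (j+1) ∧ Co B1 i} = ∅ := by
        ext i; simp only [Set.mem_ofPred_eq, Set.mem_empty_iff_false, iff_false]
        rintro ⟨_, h1, h2, h3⟩
        exact noC j hj hb i h1 h2 h3
      rw [this]; simp
    · refine le_trans (Set.ncard_le_ncard ?_ ((Set.finite_lt_nat n).subset (fun i hi => hi.1))) (h.blk j hj)
      rintro i ⟨h0, h1, h2, β, u, v, hu, hv, huv, ht⟩
      rw [W1 i h0.le, e_good j i hb h1 h2.le] at hu hv
      rw [Tg j hj hb i h1 h2] at ht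
      exact ⟨h0, h1, h2, β, u, v, hu, hv, huv, ht⟩
  · intro x
    rw [avg_W, avg_W, W0]
    congr 1
    apply Finset.sum_congr rfl
    intro v hv
    rw [hrun x v hv n le_rfl, r_id _ en]
    rfl
  · intro j hj
    by_cases hb : Bad j
    · exact Or.inl (noC j hj hb)
    · right
      have hb' := hb
      simp only [Bad] at hb'
      push Not at hb'
      obtain ⟨x, hx⟩ := hb'
      refine ⟨x, ?_⟩
      rw [Wc]
      intro u hu v hv
      have cg : ∀ u, B1.runTo x u (c j) (c (j+1)) = B.runTo x u (c j) (c (j+1)) := by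
        intro u
        apply run_congr _ _ _ _ _ _ _ (hmono (by omega))
        intro k h1 h2; rw [Tg j hj hb k h1 h2]
      rw [cg, cg]; exact hx u hu v hv

theorem exists_cut (G : Finset ℕ) (M : ℕ) (h : M ≤ G.card) :
    ∃ j, (G.filter (fun g => j ≤ g)).card = M := by
  classical
  have ex : ∃ j, (G.filter (fun g => j ≤ g)).card ≤ M := by
    refine ⟨G.sup id + 1, ?_⟩
    rw [Finset.filter_false_of_mem]
    · simp
    · intro g hg; have : g ≤ G.sup id := Finset.le_sup (f := id) hg
      omega
  refine ⟨Nat.find ex, le_antisymm (Nat.find_spec ex) ?_⟩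
  rcases Nat.eq_zero_or_pos (Nat.find ex) with h0 | h0
  · rw [h0]; simpa using h
  · have := Nat.find_min ex (m := Nat.find ex - 1) (by omega)
    have h2 : (G.filter (fun g => Nat.find ex - 1 ≤ g)).card ≤
        (insert (Nat.find ex - 1) (G.filter (fun g => Nat.find ex ≤ g))).card := by
      apply Finset.card_le_card
      intro g; simp only [Finset.mem_filter, Finset.mem_insert]
      rintro ⟨h1, h2⟩
      by_cases h3 : g = Nat.find ex - 1
      · exact Or.inl h3
      · exact Or.inr ⟨h1, by omega⟩
    have := Finset.card_insert_le (Nat.find ex - 1) (G.filter (fun g => Nat.find ex ≤ g))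
    omega

/-- truncation -/
theorem trunc (B : ROBP 3 n) (t : ℕ) (ht : t ≤ n) : ∃ B' : ROBP 3 n,
    (∀ i ≤ n, W B' i = W B (max i t)) ∧ (∀ i < t, ¬ Co B' i) ∧ (∀ i, t ≤ i → i < n → Co B' i → Co B i) ∧
    ∀ x, B'.avgEval x =
      (∑ v ∈ W B t, (if B.accept (B.runTo x v t n) then (-1 : ℝ) else 1)) / ((W B t).card : ℝ) := by
  let B' : ROBP 3 n := mk (fun i => W B (max i t)) (fun i => W_ne _ _)
    (fun i => if i < t then fun _ v => v else T B i) (by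
      intro i b v hi hv
      by_cases h : i < t
      · rw [if_pos h]
        rw [max_eq_right (by omega)] at hv ⊢
        exact hv
      · rw [if_neg h]
        rw [max_eq_left (by omega)] at hv ⊢
        exact T_mem _ _ _ _ hv) B.accept
  have hW : ∀ i ≤ n, W B' i = W B (max i t) := fun i hi => W_mk _ _ _ _ _ _ hi
  have hT : ∀ i < n, T B' i = if i < t then fun _ v => v else T B i := fun i hi => T_mk _ _ _ _ _ _ hi
  refine ⟨B', hW, ?_, ?_, ?_⟩
  · rintro i hi ⟨b, u, v, -, -, huv, h⟩
    rw [hT i (by omega), if_pos hi] at h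
    exact huv h
  · rintro i hi hn ⟨b, u, v, hu, hv, huv, h⟩
    rw [hT i hn, if_neg (by omega)] at h
    rw [hW i hn.le, max_eq_left hi] at hu hv
    exact ⟨b, u, v, hu, hv, huv, h⟩
  · intro x
    rw [avg_W, hW 0 (by omega), max_eq_right (by omega)]
    congr 1
    apply Finset.sum_congr rfl
    intro v _
    have h1 : ∀ i ≤ t, B'.runTo x v 0 i = v := by
      intro i
      induction i with
      | zero => intro _; exact run_self _ _ _ _ _ le_rfl
      | succ i ih =>
        intro hi
        rw [run_succ' _ _ _ _ _ (by omega), ih (by omega), hT i (by omega), if_pos (by omega)]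
    have h2 : B'.runTo x v 0 n = B.runTo x v t n := by
      rw [← run_comp B' x v 0 t n (by omega) ht, h1 t le_rfl]
      apply run_congr _ _ _ _ _ _ _ ht
      intro k hk hk'
      rw [hT k hk', if_neg (by omega)]
    rw [h2]; rfl

theorem avg_bound (B : ROBP 3 n) (x) : |B.avgEval x| ≤ 1 := by
  rw [avg_W, abs_div, Nat.abs_cast]
  have hpos : (0:ℝ) < (W B 0).card := by exact_mod_cast (W_ne B 0).card_pos
  rw [div_le_one hpos]
  refine (Finset.abs_sum_le_sum_abs _ _).trans ?_
  refine (Finset.sum_le_card_nsmul _ _ 1 ?_).trans (by simp)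
  intro v _; split_ifs <;> simp

theorem main (M : ℕ) (hM : 1 ≤ M) (ℓ m : ℕ) (B0 : ROBP 3 n) (hB : B0.IsDecomp ℓ m) :
    ∃ B' : ROBP 3 n, B'.IsDecomp ℓ M ∧
      ∃ E : (Fin n → Bool) → ℝ,
        (∀ x, B0.avgEval x = B'.avgEval x + E x) ∧
        ((∀ x, E x = 0) ∨
          ∃ (S : Fin M → Finset (Fin n)) (F : Fin M → (Fin n → Bool) → Prop),
            (∀ i j, i ≠ j → Disjoint (S i) (S j)) ∧
            (∀ i, ∃ x, F i x) ∧
            (∀ i, Event31 ℓ (S i) (F i)) ∧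
            (∀ x, |E x| ≤ ind (∀ i, ¬ F i x))) := by
  classical
  obtain ⟨c, hc0⟩ := dec_of _ _ _ hB
  obtain ⟨B, hc, havg, hgood⟩ := normalize B0 ℓ m c hc0
  let G : Finset ℕ := (Finset.range m).filter
    (fun j => ¬ ∀ i, c j ≤ i → i < c (j+1) → ¬ Co B i)
  have hno : ∀ i j, j < m → j ∉ G → c j ≤ i → i < c (j+1) → ¬ Co B i := by
    intro i j hj hG h1 h2
    simp only [G, Finset.mem_filter, Finset.mem_range, not_and, not_not] at hG
    exact hG hj i h1 h2
  have hmerge : ∀ j ∈ G, j < m ∧ ∃ x, ∀ u ∈ W B (c j), ∀ v ∈ W B (c j),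
          B.runTo x u (c j) (c (j+1)) = B.runTo x v (c j) (c (j+1)) := by
    intro j hj
    simp only [G, Finset.mem_filter, Finset.mem_range] at hj
    exact ⟨hj.1, (hgood j hj.1).resolve_left hj.2⟩
  rcases le_total G.card M with hGM | hGM
  · exact ⟨B, regroup B ℓ m M c hc G hGM hM hno, fun _ => 0, by simp [havg], Or.inl (fun _ => rfl)⟩
  obtain ⟨j0, hj0⟩ := exists_cut G M hGM
  set G' := G.filter (fun g => j0 ≤ g) with hG'
  have hj0m : j0 < m := by
    have : G'.Nonempty := by rw [← Finset.card_pos]; omega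
    obtain ⟨g, hg⟩ := this
    simp only [hG', Finset.mem_filter] at hg
    have := (hmerge g hg.1).1
    omega
  set t := c j0 with htdef
  have ht : t ≤ n := hc.le _
  obtain ⟨B', w1, w2, w3, w4⟩ := trunc B t ht
  refine ⟨B', ?_, fun x => B.avgEval x - B'.avgEval x, by simp [havg], Or.inr ?_⟩
  · apply regroup B' ℓ m M c ?_ G' hj0.le hM
    · intro i j hj hjG h1 h2 hCo
      have hi : i < n := by have := hc.le (j+1); omega
      by_cases hit : i < t
      · exact w2 i hit hCo
      · have hjj : j0 ≤ j := by
          by_contra hh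
          have := hc.mono (show j + 1 ≤ j0 by omega)
          omega
        refine hno i j hj ?_ h1 h2 (w3 i (by omega) hi hCo)
        intro hg; apply hjG; simp [hG', hg, hjj]
    · refine ⟨hc.mono, hc.z, hc.l, hc.le, ?_, ?_⟩
      · intro j hj
        rw [w1 _ (hc.le j)]
        rcases le_total j j0 with hh | hh
        · rw [max_eq_right (hc.mono hh)]; exact hc.w _ hj0m.le
        · rw [max_eq_left (hc.mono hh)]; exact hc.w _ hj
      · intro j hj
        refine le_trans (Set.ncard_le_ncard ?_ ((Set.finite_lt_nat n).subset (fun i hi => hi.1))) (hc.blk j hj)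
        rintro i ⟨h0, h1, h2, h3⟩
        refine ⟨h0, h1, h2, ?_⟩
        by_cases hit : i < t
        · exact absurd h3 (w2 i hit)
        · exact w3 i (by omega) h0 h3
  · have ev : ∀ j ∈ G, ∃ F : (Fin n → Bool) → Prop, (∃ x, F x) ∧
      Event31 ℓ (Finset.univ.filter (fun i : Fin n => c j ≤ (i:ℕ) ∧ (i:ℕ) < c (j+1))) F ∧
      ∀ x, F x → ∀ u ∈ W B (c j), ∀ v ∈ W B (c j),
        B.runTo x u (c j) (c (j+1)) = B.runTo x v (c j) (c (j+1)) := by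
      intro j hj
      obtain ⟨hm, hx⟩ := hmerge j hj
      exact event B ℓ _ _ (hc.mono (by omega)) (hc.le _) (hc.w j hm.le) (hc.blk j hm) hx
    choose! F hF1 hF2 hF3 using ev
    let g : Fin M → ℕ := fun k => G'.orderEmbOfFin hj0 k
    have gmem : ∀ k, g k ∈ G ∧ j0 ≤ g k := by
      intro k
      have := G'.orderEmbOfFin_mem hj0 k
      exact Finset.mem_filter.1 this
    refine ⟨fun k => Finset.univ.filter (fun i : Fin n => c (g k) ≤ (i:ℕ) ∧ (i:ℕ) < c (g k+1)),
      fun k => F (g k), ?_, ?_, ?_, ?_⟩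
    · intro i j hij
      rw [Finset.disjoint_left]
      intro a ha hb
      simp only [Finset.mem_filter, Finset.mem_univ, true_and] at ha hb
      have := uniq_blk c hc.mono ha.1 ha.2 hb.1 hb.2
      exact hij ((G'.orderEmbOfFin hj0).injective this)
    · intro k; exact hF1 _ (gmem k).1
    · intro k; exact hF2 _ (gmem k).1
    · intro x
      let hh : Fin 3 → ℝ := fun v => if B.accept (B.runTo x v t n) then (-1 : ℝ) else 1
      have hB'x : B'.avgEval x = (∑ v ∈ W B t, hh v) / ((W B t).card : ℝ) := w4 x
      have hBx : B.avgEval x = (∑ v ∈ W B 0, hh (B.runTo x v 0 t)) / ((W B 0).card : ℝ) := by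
        rw [avg_W]; congr 1; apply Finset.sum_congr rfl; intro v _
        simp only [hh]; rw [run_comp _ _ _ _ _ _ (by omega) ht]
      have ne0 : ∀ i, ((W B i).card : ℝ) ≠ 0 := by
        intro i; exact_mod_cast (W_ne B i).card_pos.ne'
      by_cases hcst : ∀ u ∈ W B t, ∀ v ∈ W B t, hh u = hh v
      · obtain ⟨v0, hv0⟩ := W_ne B t
        have a1 : B'.avgEval x = hh v0 := by
          rw [hB'x, Finset.sum_congr rfl (fun v hv => hcst v hv v0 hv0), Finset.sum_const, nsmul_eq_mul]
          exact mul_div_cancel_left₀ _ (ne0 t)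
        have a2 : B.avgEval x = hh v0 := by
          rw [hBx, Finset.sum_congr rfl (fun v hv =>
            hcst _ (run_mem B x v 0 t (by omega) hv) v0 hv0), Finset.sum_const, nsmul_eq_mul]
          exact mul_div_cancel_left₀ _ (ne0 0)
        simp only [a1, a2, sub_self, abs_zero]
        unfold ind; split_ifs <;> norm_num
      · have hall : ∀ k, ¬ F (g k) x := by
          intro k hk
          apply hcst
          intro u hu v hv
          have hm := hF3 _ (gmem k).1 x hk
          have l1 : t ≤ c (g k) := hc.mono (gmem k).2
          have l2 : c (g k) ≤ c (g k + 1) := hc.mono (by omega)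
          have l3 := hc.le (g k + 1)
          have := hm _ (run_mem B x u t _ l1 hu) _ (run_mem B x v t _ l1 hv)
          rw [run_comp _ _ _ _ _ _ l1 l2, run_comp _ _ _ _ _ _ l1 l2] at this
          simp only [hh]
          rw [← run_comp B x u t _ n (l1.trans l2) l3, this, run_comp B x v t _ n (l1.trans l2) l3]
        unfold ind
        rw [if_pos hall]
        push Not at hcst
        obtain ⟨p, hp, q, hq, hpq⟩ := hcst
        have hne : p ≠ q := by rintro rfl; exact hpq rfl
        have hWt : W B t = {p, q} := by
          ext s; constructor
          · intro hs; have := two_vals (hc.w _ hj0m.le) hp hq hne hs; simpa using this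
          · intro hs; simp at hs; rcases hs with rfl | rfl <;> assumption
        have a1 : B'.avgEval x = 0 := by
          rw [hB'x, hWt, Finset.sum_pair hne]
          have : hh p + hh q = 0 := by
            simp only [hh] at hpq ⊢
            split_ifs at hpq ⊢ <;> simp_all
          rw [this]; simp
        simp only [a1, sub_zero]
        exact avg_bound B x

end SC
/-- Main structural result: every `(3, ℓ, m)`-ROBP `B` (as a
real-valued function, averaging over its start vertices) can be written as `B' + E`
where `B'` is a `(3, ℓ, C^ℓ)`-ROBP and either `E ≡ 0` or `|E(x)|` is bounded by the
conjunction of negations of `C^ℓ` non-zero events on disjoint variables, each computed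
by a `(3, ℓ, 1)`-ROBP. -/
theorem struct_colliding
    (C : ℕ) (hC : 1 ≤ C) (n ℓ m : ℕ) (B : ROBP 3 n) (hB : B.IsDecomp ℓ m) :
    ∃ B' : ROBP 3 n, B'.IsDecomp ℓ (C ^ ℓ) ∧
      ∃ E : (Fin n → Bool) → ℝ,
        (∀ x, B.avgEval x = B'.avgEval x + E x) ∧
        ((∀ x, E x = 0) ∨
          ∃ (S : Fin (C ^ ℓ) → Finset (Fin n)) (F : Fin (C ^ ℓ) → (Fin n → Bool) → Prop),
            (∀ i j, i ≠ j → Disjoint (S i) (S j)) ∧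
            (∀ i, ∃ x, F i x) ∧
            (∀ i, Event31 ℓ (S i) (F i)) ∧
            (∀ x, |E x| ≤ ind (∀ i, ¬ F i x))) := by
  exact SC.main (C ^ ℓ) (Nat.one_le_pow _ _ hC) ℓ m B hB
end
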